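/- arXiv:0712.1093 — 2 statements merged into one kernel-verified Lean document; each statement's English description precedes it below -/
import Mathlib

section
/- Let t > 0 and y > 0, and let f : ℝ × ℝ → ℝ be a nonnegative Borel measurable function. Then E[ f(M_t, A_t) · 1{A_t < 2/y} ] = e^{-y} · E[ f( M_t / (1 + (y/2)·A_t)^2 , A_t / (1 + (y/2)·A_t) ) · exp( M_t / (y^{-1} + (1/2)·A_t) ) ]. -/
open MeasureTheory ProbabilityTheory Real Set

noncomputable section

/-- A standard one-dimensional Brownian motion `B` (with `B 0 = 0`, continuous
paths, Gaussian increments and independent increments) on a probability space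
with measure `P`. -/
structure IsBrownianMotion {Ω : Type*} [MeasurableSpace Ω]
    (P : Measure Ω) (B : ℝ → Ω → ℝ) : Prop where
  isProbabilityMeasure : IsProbabilityMeasure P
  measurable : ∀ t : ℝ, Measurable (B t)
  start : ∀ ω, B 0 ω = 0
  continuous_paths : ∀ ω, Continuous fun t => B t ω
  gaussian_increments : ∀ s t : ℝ, 0 ≤ s → s ≤ t →
    P.map (fun ω => B t ω - B s ω) = gaussianReal 0 (Real.toNNReal (t - s))
  indep_increments : ∀ t : ℕ → ℝ, Monotone t → 0 ≤ t 0 →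
    iIndepFun
      (fun (i : ℕ) (ω : Ω) => B (t (i + 1)) ω - B (t i) ω) P

/-- The exponential martingale `M_t = exp (B_t - t/2)`. -/
def M {Ω : Type*} (B : ℝ → Ω → ℝ) (t : ℝ) (ω : Ω) : ℝ :=
  Real.exp (B t ω - t / 2)

/-- The time integral `A_t = ∫_0^t exp (B_s - s/2) ds`. -/
def A {Ω : Type*} (B : ℝ → Ω → ℝ) (t : ℝ) (ω : Ω) : ℝ :=
  ∫ s in (0 : ℝ)..t, Real.exp (B s ω - s / 2)

/-- The time integral with drift `ν`: `A_t^{(ν)} = ∫_0^t exp (B_s + (ν - 1/2) s) ds`. -/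
def Adrift {Ω : Type*} (B : ℝ → Ω → ℝ) (ν t : ℝ) (ω : Ω) : ℝ :=
  ∫ s in (0 : ℝ)..t, Real.exp (B s ω + (ν - 1 / 2) * s)

open Filter Topology
open scoped ENNReal NNReal

/-- The path transform in (log M, A) coordinates. -/
def ptrans (c : ℝ) (p : ℝ × ℝ) : ℝ × ℝ :=
  (p.1 - 2 * Real.log (1 + c * p.2), p.2 / (1 + c * p.2))

/-- One step of the discretised process. -/
def pstep (δ : ℝ) (p : ℝ × ℝ) (z : ℝ) : ℝ × ℝ :=
  (p.1 + z - δ / 2, p.2 + δ * Real.exp (p.1 + (z - δ / 2) / 2))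

/-- log density of one step. -/
def plog (c δ : ℝ) (p q : ℝ × ℝ) : ℝ :=
  2 / δ * Real.log ((1 + c * q.2) / (1 + c * p.2)) *
    (q.1 - p.1 - Real.log ((1 + c * q.2) / (1 + c * p.2)))

/-- density of one step. -/
def pden (c δ : ℝ) (p q : ℝ × ℝ) : ℝ≥0∞ :=
  {r : (ℝ × ℝ) × (ℝ × ℝ) | 0 < 1 + c * r.1.2 ∧ 0 < 1 + c * r.2.2}.indicator
    (fun r => ENNReal.ofReal (Real.exp (plog c δ r.1 r.2))) (p, q)

lemma measurable_ptrans (c : ℝ) : Measurable (ptrans c) := by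
  unfold ptrans; fun_prop

lemma measurable_pstep (δ : ℝ) : Measurable (fun r : (ℝ × ℝ) × ℝ => pstep δ r.1 r.2) := by
  unfold pstep; fun_prop

lemma measurable_pden (c δ : ℝ) :
    Measurable (fun r : (ℝ × ℝ) × (ℝ × ℝ) => pden c δ r.1 r.2) := by
  have : Measurable (fun r : (ℝ × ℝ) × (ℝ × ℝ) => 
     {r : (ℝ × ℝ) × (ℝ × ℝ) | 0 < 1 + c * r.1.2 ∧ 0 < 1 + c * r.2.2}.indicator
    (fun r => ENNReal.ofReal (Real.exp (plog c δ r.1 r.2))) r) := by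
    apply Measurable.indicator
    · unfold plog; fun_prop
    · apply MeasurableSet.inter
      · exact measurableSet_lt (f := fun _ => (0 : ℝ))
          (g := fun r : (ℝ × ℝ) × (ℝ × ℝ) => 1 + c * r.1.2) measurable_const (by fun_prop)
      · exact measurableSet_lt (f := fun _ => (0 : ℝ))
          (g := fun r : (ℝ × ℝ) × (ℝ × ℝ) => 1 + c * r.2.2) measurable_const (by fun_prop)
  exact this

/-- The transformed increment. -/
def zmap (c δ : ℝ) (p : ℝ × ℝ) (z : ℝ) : ℝ :=
  z - 2 * Real.log ((1 + c * (pstep δ p z).2) / (1 + c * p.2))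

lemma div_add_mul_aux {a c δ E : ℝ} (h1 : 1 + c * a ≠ 0) (h2 : 1 + c * (a + δ * E) ≠ 0) :
    a / (1 + c * a) + δ * (E / ((1 + c * a) * (1 + c * (a + δ * E)))) =
      (a + δ * E) / (1 + c * (a + δ * E)) := by
  rw [← mul_div_assoc, div_add_div _ _ h1 (mul_ne_zero h1 h2),
    div_eq_div_iff (mul_ne_zero h1 (mul_ne_zero h1 h2)) h2]
  ring

lemma pstep_ptrans (c δ : ℝ) (p : ℝ × ℝ) (z : ℝ) (h1 : 0 < 1 + c * p.2)
    (h2 : 0 < 1 + c * (pstep δ p z).2) :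
    pstep δ (ptrans c p) (zmap c δ p z) = ptrans c (pstep δ p z) := by
  have e1 : Real.log ((1 + c * (pstep δ p z).2) / (1 + c * p.2)) =
    Real.log (1 + c * (pstep δ p z).2) - Real.log (1 + c * p.2) :=
    Real.log_div h2.ne' h1.ne'
  ext
  · simp only [zmap, ptrans]
    rw [e1]
    simp only [pstep]
    ring
  · have e2 : (ptrans c p).1 + (zmap c δ p z - δ / 2) / 2 =
      (p.1 + (z - δ / 2) / 2) - Real.log (1 + c * p.2)
        - Real.log (1 + c * (pstep δ p z).2) := by
      simp only [zmap, ptrans]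
      rw [e1]
      ring
    have : (pstep δ (ptrans c p) (zmap c δ p z)).2 =
      (ptrans c p).2 + δ * Real.exp ((ptrans c p).1 + (zmap c δ p z - δ / 2) / 2) := rfl
    rw [this, e2, Real.exp_sub, Real.exp_sub, Real.exp_log h1, Real.exp_log h2]
    have h3 : (pstep δ p z).2 = p.2 + δ * Real.exp (p.1 + (z - δ / 2) / 2) := rfl
    simp only [ptrans]
    rw [h3] at h2 ⊢
    generalize Real.exp (p.1 + (z - δ / 2) / 2) = E at h2 ⊢
    have h1' := h1.ne'
    have h2' := h2.ne'
    rw [div_div, div_add_mul_aux h1' h2']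

lemma zmap_injOn (c δ : ℝ) (p : ℝ × ℝ) (h1 : 0 < 1 + c * p.2) :
    InjOn (zmap c δ p) {z | 0 < 1 + c * (pstep δ p z).2} := by
  have key : ∀ z, 0 < 1 + c * (pstep δ p z).2 → Real.exp (-(zmap c δ p z) / 2) =
      Real.exp (-z / 2) + c * δ * Real.exp (p.1 - δ / 4) / (1 + c * p.2) := by
    intro z hz
    have : -(zmap c δ p z) / 2 = -z / 2 +
      Real.log ((1 + c * (pstep δ p z).2) / (1 + c * p.2)) := by
      unfold zmap; ring
    rw [this, Real.exp_add, Real.exp_log (div_pos hz h1)]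
    have h3 : (pstep δ p z).2 = p.2 + δ * (Real.exp (p.1 - δ / 4) * Real.exp (z / 2)) := by
      rw [← Real.exp_add]
      simp only [pstep]
      congr 3
      ring
    have h4 : Real.exp (-z / 2) * Real.exp (z / 2) = 1 := by
      rw [← Real.exp_add]; ring_nf; simp
    rw [h3]
    generalize Real.exp (p.1 - δ / 4) = K
    generalize Real.exp (z / 2) = E1 at h4 ⊢
    generalize Real.exp (-z / 2) = E2 at h4 ⊢
    have h1' := h1.ne'
    rw [← mul_div_assoc, div_eq_iff h1', add_mul, div_mul_cancel₀ _ h1']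
    linear_combination (c * δ * K) * h4
  intro z hz w hw h
  have := key z hz
  rw [h, key w hw] at this
  have h5 := Real.exp_injective (add_right_cancel this)
  linarith

lemma zmap_deriv (c δ : ℝ) (p : ℝ × ℝ) (z : ℝ) (h1 : 0 < 1 + c * p.2)
    (h2 : 0 < 1 + c * (pstep δ p z).2) :
    HasDerivAt (zmap c δ p) ((1 + c * p.2) / (1 + c * (pstep δ p z).2)) z := by
  have d1 : HasDerivAt (fun z : ℝ => p.1 + (z - δ / 2) / 2) (1 / 2) z :=
    (((hasDerivAt_id z).sub_const (δ / 2)).div_const 2).const_add p.1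
  have d2 : HasDerivAt (fun z => (1 + c * (pstep δ p z).2) / (1 + c * p.2))
    ((c * (δ * (Real.exp (p.1 + (z - δ / 2) / 2) * (1 / 2)))) / (1 + c * p.2)) z := by
    have := (((((d1.exp).const_mul δ).const_add p.2).const_mul c).const_add 1).div_const
      (1 + c * p.2)
    exact this
  have d3 := (hasDerivAt_id z).sub ((d2.log (div_pos h2 h1).ne').const_mul 2)
  refine HasDerivAt.congr_deriv d3 ?_
  have h3 : (pstep δ p z).2 = p.2 + δ * Real.exp (p.1 + (z - δ / 2) / 2) := rfl
  rw [h3] at h2 ⊢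
  generalize Real.exp (p.1 + (z - δ / 2) / 2) = E at h2 ⊢
  have h1' := h1.ne'
  have h2' := h2.ne'
  rw [div_div_div_cancel_right₀ h1', ← mul_div_assoc, eq_div_iff h2', sub_mul,
    div_mul_cancel₀ _ h2']
  ring

lemma pden_eq (c δ : ℝ) (hδ : 0 < δ) (p : ℝ × ℝ) (z : ℝ) (h1 : 0 < 1 + c * p.2)
    (h2 : 0 < 1 + c * (pstep δ p z).2) :
    gaussianPDF 0 (Real.toNNReal δ) z * pden c δ p (pstep δ p z) =
      ENNReal.ofReal |(1 + c * p.2) / (1 + c * (pstep δ p z).2)| *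
        gaussianPDF 0 (Real.toNNReal δ) (zmap c δ p z) := by
  have hpos := div_pos h1 h2
  have hpos' := div_pos h2 h1
  rw [abs_of_pos hpos]
  have : pden c δ p (pstep δ p z) = ENNReal.ofReal (Real.exp (plog c δ p (pstep δ p z))) := by
    unfold pden
    rw [indicator_of_mem]
    exact ⟨h1, h2⟩
  rw [this]
  unfold gaussianPDF
  rw [← ENNReal.ofReal_mul (gaussianPDFReal_nonneg _ _ _), ← ENNReal.ofReal_mul hpos.le]
  congr 1
  unfold gaussianPDFReal
  rw [Real.coe_toNNReal _ hδ.le]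
  have e0 : (1 + c * p.2) / (1 + c * (pstep δ p z).2) =
      Real.exp (-Real.log ((1 + c * (pstep δ p z).2) / (1 + c * p.2))) := by
    rw [Real.exp_neg, Real.exp_log hpos', inv_div]
  rw [e0]
  have e3 : (pstep δ p z).1 - p.1 = z - δ / 2 := by simp [pstep]; ring
  unfold plog zmap
  rw [e3]
  set ε := Real.log ((1 + c * (pstep δ p z).2) / (1 + c * p.2))
  rw [mul_assoc, ← Real.exp_add, mul_left_comm, ← Real.exp_add]
  congr 2
  field_simp
  ring

lemma onestep (c δ : ℝ) (hδ : 0 < δ) (p : ℝ × ℝ) (h1 : 0 < 1 + c * p.2)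
    (V : ℝ × ℝ → ℝ≥0∞) (hV : Measurable V) :
    ∫⁻ z, pden c δ p (pstep δ p z) * V (ptrans c (pstep δ p z))
        ∂(gaussianReal 0 (Real.toNNReal δ)) ≤
      ∫⁻ z, V (pstep δ (ptrans c p) z) ∂(gaussianReal 0 (Real.toNNReal δ)) := by
  have hv : Real.toNNReal δ ≠ 0 := by simpa using hδ
  have mst : ∀ q, Measurable (pstep δ q) := fun q => 
    (measurable_pstep δ).comp (measurable_const.prodMk measurable_id)
  have mden : Measurable (fun z => pden c δ p (pstep δ p z)) :=
    (measurable_pden c δ).comp (measurable_const.prodMk (mst p))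
  have k1 : Measurable (fun z => pden c δ p (pstep δ p z) * V (ptrans c (pstep δ p z))) :=
    mden.mul (hV.comp ((measurable_ptrans c).comp (mst p)))
  have k2 : Measurable (fun z => V (pstep δ (ptrans c p) z)) := hV.comp (mst _)
  rw [gaussianReal_of_var_ne_zero _ hv,
    lintegral_withDensity_eq_lintegral_mul _ (measurable_gaussianPDF _ _) k1,
    lintegral_withDensity_eq_lintegral_mul _ (measurable_gaussianPDF _ _) k2]
  set s := {z | 0 < 1 + c * (pstep δ p z).2} with hs
  have ms : MeasurableSet s :=
    measurableSet_lt measurable_const (measurable_const.add (measurable_const.mul (mst p).snd))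
  calc _ = ∫⁻ z in s, ENNReal.ofReal |(1 + c * p.2) / (1 + c * (pstep δ p z).2)| *
        (gaussianPDF 0 (Real.toNNReal δ) (zmap c δ p z) *
          V (pstep δ (ptrans c p) (zmap c δ p z))) := by
        rw [← lintegral_indicator ms]
        congr 1
        ext z
        by_cases hz : z ∈ s
        · rw [indicator_of_mem hz]
          simp only [Pi.mul_apply, Function.comp_apply]
          rw [← mul_assoc, pden_eq c δ hδ p z h1 hz, pstep_ptrans c δ p z h1 hz, mul_assoc]
        · rw [indicator_of_notMem hz]
          have : pden c δ p (pstep δ p z) = 0 := by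
            unfold pden
            rw [indicator_of_notMem]
            intro h
            exact hz h.2
          simp [this]
    _ = ∫⁻ w in zmap c δ p '' s, gaussianPDF 0 (Real.toNNReal δ) w *
          V (pstep δ (ptrans c p) w) := by
        rw [lintegral_image_eq_lintegral_abs_deriv_mul ms
          (fun z hz => (zmap_deriv c δ p z h1 hz).hasDerivWithinAt) (zmap_injOn c δ p h1)]
    _ ≤ _ := setLIntegral_le_lintegral _ _

/-- discretised process together with the accumulated density -/
def pproc (c δ : ℝ) (z : ℕ → ℝ) : ℕ → (ℝ × ℝ) × ℝ≥0∞
  | 0 => ((0, 0), 1)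
  | k + 1 => (pstep δ (pproc c δ z k).1 (z k),
      (pproc c δ z k).2 * pden c δ (pproc c δ z k).1 (pstep δ (pproc c δ z k).1 (z k)))

lemma pproc_snd_eq_zero (c δ : ℝ) (z : ℕ → ℝ) (n : ℕ)
    (h : ¬ 0 < 1 + c * (pproc c δ z n).1.2) : (pproc c δ z n).2 = 0 := by
  cases n with
  | zero => exact absurd (by simp [pproc]) h
  | succ k =>
    simp only [pproc] at h ⊢
    have : pden c δ (pproc c δ z k).1 (pstep δ (pproc c δ z k).1 (z k)) = 0 := by
      unfold pden
      rw [indicator_of_notMem]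
      intro h'
      exact h h'.2
    simp [this]

lemma meas_pproc {Ω : Type*} (m : ℕ → MeasurableSpace Ω) (hm : Monotone m) (c δ : ℝ)
    (Z : ℕ → Ω → ℝ) (hZ : ∀ k, Measurable[m (k + 1)] (Z k)) (n : ℕ) :
    Measurable[m n] (fun ω => pproc c δ (fun k => Z k ω) n) := by
  induction n with
  | zero => simp only [pproc]; exact @measurable_const _ _ _ (m 0) _
  | succ k ih =>
    have ih' := ih.mono (hm (Nat.le_succ k)) le_rfl
    let _ := m (k + 1)
    simp only [pproc]
    have h1 : Measurable (fun ω => (pproc c δ (fun k => Z k ω) k).1) := ih'.fst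
    have h2 : Measurable (fun ω => pstep δ (pproc c δ (fun k => Z k ω) k).1 (Z k ω)) :=
      (measurable_pstep δ).comp (h1.prodMk (hZ k))
    exact h2.prodMk (ih'.snd.mul ((measurable_pden c δ).comp (h1.prodMk h2)))

lemma multistep {Ω : Type*} [mΩ : MeasurableSpace Ω] (P : Measure Ω) [IsProbabilityMeasure P]
    (c δ : ℝ) (hδ : 0 < δ) (Z : ℕ → Ω → ℝ) (hZm : ∀ k, Measurable (Z k))
    (hZi : iIndepFun Z P) (hZl : ∀ k, P.map (Z k) = gaussianReal 0 (Real.toNNReal δ))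
    (n : ℕ) (V : ℝ × ℝ → ℝ≥0∞) (hV : Measurable V) :
    ∫⁻ ω, (pproc c δ (fun k => Z k ω) n).2 * V (ptrans c (pproc c δ (fun k => Z k ω) n).1) ∂P ≤
      ∫⁻ ω, V (pproc c δ (fun k => Z k ω) n).1 ∂P := by
  have mpr : ∀ n, Measurable (fun ω => pproc c δ (fun k => Z k ω) n) := fun n =>
    meas_pproc (fun _ => mΩ) monotone_const c δ Z hZm n
  have ind : ∀ n, P.map (fun ω => (pproc c δ (fun k => Z k ω) n, Z n ω)) =
      (P.map (fun ω => pproc c δ (fun k => Z k ω) n)).prod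
        (gaussianReal 0 (Real.toNNReal δ)) := by
    intro n
    rw [← hZl n, ← indepFun_iff_map_prod_eq_prod_map_map (mpr n).aemeasurable
      (hZm n).aemeasurable]
    have h := indep_iSup_of_disjoint (S := {k | k < n}) (T := {n})
      (fun k => (hZm k).comap_le) hZi (by simp)
    rw [iSup_singleton] at h
    rw [IndepFun_iff_Indep]
    refine indep_of_indep_of_le_left h ?_
    refine Measurable.comap_le ?_
    refine meas_pproc (fun n => ⨆ k ∈ {k | k < n}, MeasurableSpace.comap (Z k) inferInstance)
      ?_ c δ Z ?_ n
    · intro i j hij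
      exact biSup_mono (fun k hk => lt_of_lt_of_le hk hij)
    · intro k
      refine Measurable.mono (comap_measurable (Z k)) ?_ le_rfl
      exact le_iSup₂_of_le k (Nat.lt_succ_self k) le_rfl
  have fub : ∀ n, ∀ F : ((ℝ × ℝ) × ℝ≥0∞) × ℝ → ℝ≥0∞, Measurable F →
      ∫⁻ ω, F (pproc c δ (fun k => Z k ω) n, Z n ω) ∂P =
      ∫⁻ ω, ∫⁻ z, F (pproc c δ (fun k => Z k ω) n, z) ∂(gaussianReal 0 (Real.toNNReal δ)) ∂P := by
    intro n F hF
    rw [← lintegral_map (f := F) hF ((mpr n).prodMk (hZm n)), ind n, lintegral_prod _ hF.aemeasurable,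
      lintegral_map hF.lintegral_prod_right' (mpr n)]
  induction n generalizing V with
  | zero => simp [pproc, ptrans]
  | succ n ih =>
    simp only [pproc]
    have mst1 : Measurable (fun r : ((ℝ × ℝ) × ℝ≥0∞) × ℝ => pstep δ r.1.1 r.2) :=
      (measurable_pstep δ).comp (measurable_fst.fst.prodMk measurable_snd)
    have mV1 : Measurable (fun q : ℝ × ℝ => ∫⁻ z, V (pstep δ q z) 
        ∂(gaussianReal 0 (Real.toNNReal δ))) :=
      (hV.comp (measurable_pstep δ)).lintegral_prod_right'
    have mden1 : Measurable (fun r : ((ℝ × ℝ) × ℝ≥0∞) × ℝ => 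
        pden c δ r.1.1 (pstep δ r.1.1 r.2)) :=
      (measurable_pden c δ).comp (measurable_fst.fst.prodMk mst1)
    have f1 := fub n (fun r => r.1.2 * pden c δ r.1.1 (pstep δ r.1.1 r.2) *
      V (ptrans c (pstep δ r.1.1 r.2)))
      ((measurable_fst.snd.mul mden1).mul (hV.comp ((measurable_ptrans c).comp mst1)))
    have f2 := fub n (fun r => V (pstep δ r.1.1 r.2)) (hV.comp mst1)
    simp only at f1 f2
    rw [f1, f2]
    refine le_trans ?_ (ih _ mV1)
    refine lintegral_mono fun ω => ?_
    set R := pproc c δ (fun k => Z k ω) n with hR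
    by_cases h : 0 < 1 + c * R.1.2
    · simp_rw [mul_assoc]
      have mst2 : Measurable (pstep δ R.1) := 
        (measurable_pstep δ).comp (measurable_const.prodMk measurable_id)
      rw [lintegral_const_mul _ ?_]
      · exact mul_le_mul_right (onestep c δ hδ R.1 h V hV) _
      · exact ((measurable_pden c δ).comp (measurable_const.prodMk mst2)).mul
          (hV.comp ((measurable_ptrans c).comp mst2))
    · have : R.2 = 0 := pproc_snd_eq_zero c δ _ n h
      simp [this]


lemma abs_sinh_sub_le (x : ℝ) (hx : |x| ≤ 1) : |Real.sinh x - x| ≤ |x| ^ 3 := by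
  have h1 := Real.exp_bound hx (n := 3) (by norm_num)
  have h2 := Real.exp_bound (x := -x) (by simpa using hx) (n := 3) (by norm_num)
  simp only [Finset.sum_range_succ, Finset.sum_range_zero, Nat.factorial, abs_neg] at h1 h2
  norm_num at h1 h2
  rw [Real.sinh_eq]
  rw [abs_le] at h1 h2 ⊢
  have : 0 ≤ |x| ^ 3 := by positivity
  constructor <;> linarith [h1.1, h1.2, h2.1, h2.2]

lemma abs_mul_sub_sinh (x y : ℝ) (hx : |x| ≤ 1) (hy : |y| ≤ 1) :
    |x * y - Real.sinh x * Real.sinh y| ≤ 2 * (|x| * |y| ^ 3 + |y| * |x| ^ 3) := by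
  have h1 := abs_sinh_sub_le x hx
  have h2 := abs_sinh_sub_le y hy
  have e : x * y - Real.sinh x * Real.sinh y =
    -(x * (Real.sinh y - y)) - (Real.sinh y - y) * (Real.sinh x - x) - y * (Real.sinh x - x) := by
    ring
  have h3 : |y| ^ 3 ≤ |y| := by
    have := pow_le_of_le_one (abs_nonneg y) hy (n := 3) (by norm_num)
    exact this
  rw [e]
  calc _ ≤ |x * (Real.sinh y - y)| + |(Real.sinh y - y) * (Real.sinh x - x)|
        + |y * (Real.sinh x - x)| := by
        refine (abs_sub _ _).trans ?_
        gcongr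
        refine (abs_sub _ _).trans ?_
        rw [abs_neg]
    _ ≤ |x| * |y| ^ 3 + |y| * |x| ^ 3 + |y| * |x| ^ 3 := by
        rw [abs_mul, abs_mul, abs_mul]
        have k1 := mul_le_mul_of_nonneg_left h2 (abs_nonneg x)
        have k2 := mul_le_mul (h2.trans h3) h1 (abs_nonneg _) (abs_nonneg _)
        have k3 := mul_le_mul_of_nonneg_left h1 (abs_nonneg y)
        linarith
    _ ≤ _ := by nlinarith [mul_nonneg (abs_nonneg x) (pow_nonneg (abs_nonneg y) 3)]

lemma plog_identity (c δ : ℝ) (hδ : 0 < δ) (p : ℝ × ℝ) (z ε Δ : ℝ) (h1 : 0 < 1 + c * p.2)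
    (h2 : 0 < 1 + c * (pstep δ p z).2)
    (hε : ε = Real.log ((1 + c * (pstep δ p z).2) / (1 + c * p.2)))
    (hΔ : Δ = z - δ / 2 - ε) :
    plog c δ p (pstep δ p z) - 2 * c * (Real.exp (pstep δ p z).1 / (1 + c * (pstep δ p z).2)
      - Real.exp p.1 / (1 + c * p.2)) =
    8 / δ * (ε / 2 * (Δ / 2) - Real.sinh (ε / 2) * Real.sinh (Δ / 2)) := by
  have e3 : (pstep δ p z).1 - p.1 = z - δ / 2 := by simp [pstep]; ring
  have e4 : plog c δ p (pstep δ p z) = 2 / δ * ε * Δ := by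
    unfold plog
    rw [e3, ← hε, ← hΔ]
  have e5 : Real.exp (pstep δ p z).1 = Real.exp p.1 * (Real.exp (Δ / 2) * Real.exp (ε / 2)) ^ 2 := by
    rw [← Real.exp_add, ← Real.exp_nat_mul, ← Real.exp_add]
    congr 1
    push_cast
    linarith
  have e6 : (1 + c * (pstep δ p z).2) = (1 + c * p.2) * Real.exp (ε / 2) ^ 2 := by
    rw [← Real.exp_nat_mul]
    have : ((2 : ℕ) : ℝ) * (ε / 2) = ε := by push_cast; ring
    rw [this, hε, Real.exp_log (div_pos h2 h1)]
    field_simp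
  have e7 : (pstep δ p z).2 = p.2 + δ * (Real.exp p.1 * (Real.exp (Δ / 2) * Real.exp (ε / 2))) := by
    rw [← Real.exp_add, ← Real.exp_add]
    simp only [pstep]
    congr 3
    linarith
  have e8 : c * (δ * (Real.exp p.1 * (Real.exp (Δ / 2) * Real.exp (ε / 2)))) =
      (1 + c * p.2) * (Real.exp (ε / 2) ^ 2 - 1) := by
    rw [e7] at e6
    linarith
  rw [e4, e5, e6, Real.sinh_eq, Real.sinh_eq, Real.exp_neg, Real.exp_neg]
  have hE := Real.exp_pos (ε / 2)
  have hD := Real.exp_pos (Δ / 2)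
  generalize Real.exp (ε / 2) = E at *
  generalize Real.exp (Δ / 2) = D at *
  generalize Real.exp p.1 = m at *
  generalize hb : 1 + c * p.2 = b at *
  have hc : c * m = b * (E ^ 2 - 1) / (δ * D * E) := by
    field_simp
    linarith
  have : 2 * c * (m * (D * E) ^ 2 / (b * E ^ 2) - m / b) = 2 * (c * m) * (D ^ 2 - 1) / b := by
    field_simp
  rw [this, hc]
  field_simp
  ring

lemma plog_estimate (c δ C : ℝ) (hδ : 0 < δ) (hC : 1 / 2 ≤ C) (hCδ : 2 * C * δ ≤ 1)
    (p : ℝ × ℝ) (z : ℝ) (hz : |z| ≤ 1) (h1 : 0 < 1 + c * p.2)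
    (h2 : 0 < 1 + c * (pstep δ p z).2)
    (hε : |Real.log ((1 + c * (pstep δ p z).2) / (1 + c * p.2))| ≤ C * δ) :
    |plog c δ p (pstep δ p z) - 2 * c * (Real.exp (pstep δ p z).1 / (1 + c * (pstep δ p z).2)
      - Real.exp p.1 / (1 + c * p.2))| ≤ 8 * C * |z| ^ 3 + 65 * C ^ 4 * δ ^ 3 := by
  obtain ⟨ε, hε'⟩ : ∃ ε, ε = Real.log ((1 + c * (pstep δ p z).2) / (1 + c * p.2)) := ⟨_, rfl⟩
  obtain ⟨Δ, hΔ⟩ : ∃ Δ, Δ = z - δ / 2 - ε := ⟨_, rfl⟩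
  rw [plog_identity c δ hδ p z ε Δ h1 h2 hε' hΔ]
  rw [← hε'] at hε
  have hΔ1 : |Δ| ≤ |z| + 2 * (C * δ) := by
    rw [hΔ]
    calc |z - δ / 2 - ε| ≤ |z - δ / 2| + |ε| := abs_sub _ _
      _ ≤ |z| + |δ / 2| + |ε| := by gcongr; exact abs_sub _ _
      _ ≤ _ := by
        rw [abs_of_pos (by positivity : 0 < δ / 2)]
        nlinarith
  have hx : |ε / 2| = |ε| / 2 := by rw [abs_div]; norm_num
  have hy : |Δ / 2| = |Δ| / 2 := by rw [abs_div]; norm_num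
  have hb := abs_mul_sub_sinh (ε / 2) (Δ / 2) (by rw [hx]; linarith) (by rw [hy]; linarith)
  rw [hx, hy] at hb
  rw [abs_mul, abs_of_pos (by positivity : 0 < 8 / δ)]
  have n1 := abs_nonneg ε
  have n2 := abs_nonneg Δ
  have n3 := abs_nonneg z
  have n4 : 0 < C := by linarith
  generalize |ε| = e at *
  generalize |Δ| = D at *
  generalize |z| = w at *
  have s1 : D * e ^ 2 ≤ D ^ 3 + e ^ 3 := by
    rcases le_total D e with h | h
    · nlinarith [pow_nonneg n2 3, mul_le_mul_of_nonneg_right h (sq_nonneg e)]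
    · have : e ^ 2 ≤ D ^ 2 := by gcongr
      nlinarith [pow_nonneg n1 3, mul_le_mul_of_nonneg_left this n2]
  have s2 : D ^ 3 ≤ 4 * (w ^ 3 + (2 * (C * δ)) ^ 3) := by
    have hq : 0 ≤ 2 * (C * δ) := by positivity
    calc D ^ 3 ≤ (w + 2 * (C * δ)) ^ 3 := by gcongr
      _ ≤ _ := by
        have := add_pow_le n3 hq 3
        norm_num at this
        linarith
  have s3 : e ^ 3 ≤ (C * δ) ^ 3 := by gcongr
  calc 8 / δ * |ε / 2 * (Δ / 2) - sinh (ε / 2) * sinh (Δ / 2)| ≤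
      8 / δ * (2 * (e / 2 * (D / 2) ^ 3 + D / 2 * (e / 2) ^ 3)) := by gcongr
    _ = e / δ * (D ^ 3 + D * e ^ 2) := by field_simp; ring
    _ ≤ C * (D ^ 3 + D * e ^ 2) := by
        gcongr
        rw [div_le_iff₀ hδ]; exact hε
    _ ≤ C * (2 * (4 * (w ^ 3 + (2 * (C * δ)) ^ 3)) + (C * δ) ^ 3) := by
        refine mul_le_mul_of_nonneg_left ?_ n4.le
        linarith
    _ = _ := by ring

/-- increments of a path on a grid -/
def zinc (b : ℝ → ℝ) (δ : ℝ) (k : ℕ) : ℝ := b ((k + 1 : ℕ) * δ) - b (k * δ)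

lemma pproc_fst (c δ : ℝ) (b : ℝ → ℝ) (hb0 : b 0 = 0) (k : ℕ) :
    (pproc c δ (zinc b δ) k).1.1 = b (k * δ) - k * δ / 2 := by
  induction k with
  | zero => simp [pproc, hb0]
  | succ k ih =>
    simp only [pproc, pstep, ih, zinc]
    push_cast
    ring

lemma pproc_snd_succ (c δ : ℝ) (b : ℝ → ℝ) (hb0 : b 0 = 0) (k : ℕ) :
    (pproc c δ (zinc b δ) (k + 1)).1.2 = (pproc c δ (zinc b δ) k).1.2 +
      δ * Real.exp (((b (k * δ) - k * δ / 2) +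
        (b ((k + 1 : ℕ) * δ) - (k + 1 : ℕ) * δ / 2)) / 2) := by
  simp only [pproc, pstep, pproc_fst c δ b hb0, zinc]
  congr 3
  push_cast
  ring

lemma riemann (c t : ℝ) (ht : 0 < t) (b : ℝ → ℝ) (hb : Continuous b) (hb0 : b 0 = 0) :
    Tendsto (fun n : ℕ => (pproc c (t / (n + 1 : ℕ)) (zinc b (t / (n + 1 : ℕ))) (n + 1)).1.2) atTop
      (𝓝 (∫ s in (0 : ℝ)..t, Real.exp (b s - s / 2))) := by
  set X : ℝ → ℝ := fun s => b s - s / 2 with hX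
  have hXc : Continuous X := by fun_prop
  have hF : Continuous (fun s => Real.exp (X s)) := by fun_prop
  have hu : UniformContinuousOn (fun s => Real.exp (X s)) (Icc 0 t) :=
    isCompact_Icc.uniformContinuousOn_of_continuous hF.continuousOn
  rw [Metric.uniformContinuousOn_iff] at hu
  rw [Metric.tendsto_atTop]
  intro η hη
  obtain ⟨d, hd, hu⟩ := hu (η / (2 * t)) (by positivity)
  obtain ⟨N, hN⟩ := exists_nat_gt (t / d)
  refine ⟨N, fun n hn => ?_⟩
  set δ := t / (n + 1 : ℕ) with hδ
  have hδ0 : 0 < δ := by positivity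
  have hnδ : (n + 1 : ℕ) * δ = t := by rw [hδ]; field_simp
  have hδd : δ < d := by
    rw [hδ, div_lt_iff₀ (by positivity)]
    rw [div_lt_iff₀ hd] at hN
    have : (N : ℝ) ≤ (n + 1 : ℕ) := by exact_mod_cast (by omega : N ≤ n + 1)
    nlinarith
  have key : ∀ k ≤ n + 1, |(pproc c δ (zinc b δ) k).1.2 -
      ∫ s in (0 : ℝ)..(k * δ), Real.exp (X s)| ≤ k * (η / (2 * t) * δ) := by
    intro k hk
    induction k with
    | zero => simp [pproc]
    | succ k ih =>
      have ih := ih (by omega)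
      rw [pproc_snd_succ c δ b hb0]
      rw [← intervalIntegral.integral_add_adjacent_intervals (b := k * δ)
        (hF.intervalIntegrable _ _) (hF.intervalIntegrable _ _)]
      have hk1 : ((k + 1 : ℕ) : ℝ) * δ = k * δ + δ := by push_cast; ring
      have hk2 : k * δ + δ ≤ t := by
        rw [← hk1, ← hnδ]
        gcongr
      have hk0 : 0 ≤ k * δ := by positivity
      have e1 : δ * Real.exp ((X (k * δ) + X ((k + 1 : ℕ) * δ)) / 2) =
        ∫ s in (k * δ)..((k + 1 : ℕ) * δ), Real.exp ((X (k * δ) + X ((k + 1 : ℕ) * δ)) / 2) := by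
        rw [intervalIntegral.integral_const, hk1]
        simp
      have e2 : |δ * Real.exp ((X (k * δ) + X ((k + 1 : ℕ) * δ)) / 2) -
          ∫ s in (k * δ)..((k + 1 : ℕ) * δ), Real.exp (X s)| ≤ η / (2 * t) * δ := by
        rw [e1, ← intervalIntegral.integral_sub (by simp) (hF.intervalIntegrable _ _)]
        have := intervalIntegral.norm_integral_le_of_norm_le_const
          (f := fun s => Real.exp ((X (k * δ) + X ((k + 1 : ℕ) * δ)) / 2) - Real.exp (X s))
          (a := k * δ) (b := (k + 1 : ℕ) * δ) (C := η / (2 * t)) ?_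
        · rw [hk1, add_sub_cancel_left, abs_of_pos hδ0, Real.norm_eq_abs] at this
          rw [hk1]
          exact this
        · intro s hs
          rw [hk1, uIoc_of_le (by linarith)] at hs
          have u1 := hu (k * δ) ⟨hk0, by linarith⟩ s ⟨by linarith [hs.1], by linarith [hs.2]⟩
            (by rw [Real.dist_eq, abs_lt]; constructor <;> linarith [hs.1, hs.2])
          have u2 := hu (k * δ + δ) ⟨by linarith, hk2⟩ s ⟨by linarith [hs.1], by linarith [hs.2]⟩
            (by rw [Real.dist_eq, abs_lt]; constructor <;> linarith [hs.1, hs.2])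
          rw [← hk1] at u2
          rw [Real.dist_eq] at u1 u2
          rw [Real.norm_eq_abs]
          rw [abs_lt] at u1 u2
          rw [abs_le]
          rcases le_total (X (k * δ)) (X ((k + 1 : ℕ) * δ)) with h | h
          · have v1 := Real.exp_le_exp.2 (show X (k * δ) ≤ (X (k * δ) + X ((k + 1 : ℕ) * δ)) / 2 by linarith)
            have v2 := Real.exp_le_exp.2 (show (X (k * δ) + X ((k + 1 : ℕ) * δ)) / 2 ≤ X ((k + 1 : ℕ) * δ) by linarith)
            constructor <;> linarith [u1.1, u1.2, u2.1, u2.2]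
          · have v1 := Real.exp_le_exp.2 (show X ((k + 1 : ℕ) * δ) ≤ (X (k * δ) + X ((k + 1 : ℕ) * δ)) / 2 by linarith)
            have v2 := Real.exp_le_exp.2 (show (X (k * δ) + X ((k + 1 : ℕ) * δ)) / 2 ≤ X (k * δ) by linarith)
            constructor <;> linarith [u1.1, u1.2, u2.1, u2.2]
      have e3 : ((k + 1 : ℕ) : ℝ) * (η / (2 * t) * δ) = k * (η / (2 * t) * δ) + η / (2 * t) * δ := by
        push_cast; ring
      rw [e3]
      rw [abs_le] at ih e2 ⊢
      simp only [hX] at ih e2 ⊢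
      constructor <;> linarith [ih.1, ih.2, e2.1, e2.2]
  have := key (n + 1) le_rfl
  rw [hnδ] at this
  rw [Real.dist_eq]
  refine lt_of_le_of_lt this ?_
  have : ((n + 1 : ℕ) : ℝ) * (η / (2 * t) * δ) = η / 2 := by
    calc _ = η / (2 * t) * ((n + 1 : ℕ) * δ) := by ring
      _ = _ := by rw [hnδ]; field_simp
  rw [this]
  linarith

lemma abs_log_div_le {p q l : ℝ} (hl : 0 < l) (hp : l ≤ p) (hq : l ≤ q) :
    |Real.log (q / p)| ≤ |q - p| / l := by
  have aux : ∀ p q : ℝ, l ≤ p → l ≤ q → Real.log (q / p) ≤ |q - p| / l := by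
    intro p q hp hq
    have p0 : 0 < p := by linarith
    have q0 : 0 < q := by linarith
    calc Real.log (q / p) ≤ q / p - 1 := Real.log_le_sub_one_of_pos (div_pos q0 p0)
      _ = (q - p) / p := by field_simp
      _ ≤ |q - p| / p := by gcongr; exact le_abs_self _
      _ ≤ |q - p| / l := by gcongr
  rw [abs_le]
  refine ⟨?_, aux p q hp hq⟩
  have := aux q p hq hp
  rw [← inv_div, Real.log_inv, abs_sub_comm] at this
  linarith

lemma pproc_den (c δ : ℝ) (z : ℕ → ℝ) (n : ℕ)
    (h : ∀ k ≤ n, 0 < 1 + c * (pproc c δ z k).1.2) :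
    (pproc c δ z n).2 = ENNReal.ofReal (Real.exp
      (∑ k ∈ Finset.range n, plog c δ (pproc c δ z k).1 (pproc c δ z (k + 1)).1)) := by
  induction n with
  | zero => simp [pproc]
  | succ n ih =>
    rw [Finset.sum_range_succ, Real.exp_add, ENNReal.ofReal_mul (Real.exp_pos _).le,
      ← ih (fun k hk => h k (by omega))]
    conv_lhs => rw [pproc]
    unfold pden
    rw [indicator_of_mem]
    · rfl
    · exact ⟨h n (by omega), h (n + 1) le_rfl⟩

lemma density_tendsto (c t : ℝ) (ht : 0 < t) (b : ℝ → ℝ) (hb : Continuous b) (hb0 : b 0 = 0)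
    (ns : ℕ → ℕ) (hns : Tendsto ns atTop atTop)
    (hz : Tendsto (fun i => ∑ k ∈ Finset.range (ns i + 1),
      |zinc b (t / (ns i + 1 : ℕ)) k| ^ 3) atTop (𝓝 0))
    (a : ℝ) (ha : a = ∫ s in (0 : ℝ)..t, Real.exp (b s - s / 2)) (hpos : 0 < 1 + c * a) :
    Tendsto (fun i => (pproc c (t / (ns i + 1 : ℕ)) (zinc b (t / (ns i + 1 : ℕ))) (ns i + 1)).2)
      atTop (𝓝 (ENNReal.ofReal
        (Real.exp (2 * c * (Real.exp (b t - t / 2) / (1 + c * a) - 1))))) := by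
  have hA := (riemann c t ht b hb hb0).comp hns
  rw [← ha] at hA
  have hXc : Continuous (fun s => Real.exp (b s - s / 2)) := by fun_prop
  obtain ⟨K, hK⟩ := (isCompact_Icc (a := 0) (b := t)).bddAbove_image hXc.continuousOn
  have hK : ∀ s ∈ Icc 0 t, Real.exp (b s - s / 2) ≤ K := fun s hs => hK ⟨s, hs, rfl⟩
  have hK0 : 0 < K := (Real.exp_pos _).trans_le (hK 0 ⟨le_rfl, ht.le⟩)
  obtain ⟨l, hl⟩ : ∃ l, l = min 1 ((1 + c * a) / 2) := ⟨_, rfl⟩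
  have hl0 : 0 < l := by rw [hl]; exact lt_min one_pos (by linarith)
  obtain ⟨C, hC⟩ : ∃ C, C = |c| * K / l + 1 := ⟨_, rfl⟩
  have hC1 : 1 ≤ C := by rw [hC]; have : 0 ≤ |c| * K / l := by positivity
                         linarith
  have hδt : Tendsto (fun i => t / ((ns i + 1 : ℕ) : ℝ)) atTop (𝓝 0) := by
    have h1 : Tendsto (fun i => ((ns i + 1 : ℕ) : ℝ)) atTop atTop :=
      tendsto_natCast_atTop_atTop.comp ((tendsto_add_atTop_nat 1).comp hns)
    exact h1.const_div_atTop t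
  have hcA : Tendsto (fun i => 1 + c * (pproc c (t / (ns i + 1 : ℕ)) (zinc b (t / (ns i + 1 : ℕ)))
      (ns i + 1)).1.2) atTop (𝓝 (1 + c * a)) := (hA.const_mul c).const_add 1
  have ev1 : ∀ᶠ i in atTop, l ≤ 1 + c * (pproc c (t / (ns i + 1 : ℕ))
      (zinc b (t / (ns i + 1 : ℕ))) (ns i + 1)).1.2 := by
    refine hcA.eventually (eventually_ge_nhds ?_)
    calc l ≤ (1 + c * a) / 2 := by rw [hl]; exact min_le_right _ _
      _ < _ := by linarith
  have ev2 : ∀ᶠ i in atTop, 2 * C * (t / ((ns i + 1 : ℕ) : ℝ)) ≤ 1 := by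
    have := hδt.const_mul (2 * C)
    rw [mul_zero] at this
    exact this.eventually (eventually_le_nhds one_pos)
  have ev3 : ∀ᶠ i in atTop, ∑ k ∈ Finset.range (ns i + 1),
      |zinc b (t / (ns i + 1 : ℕ)) k| ^ 3 ≤ 1 := hz.eventually (eventually_le_nhds one_pos)
  -- the main estimate
  have main : ∀ᶠ i in atTop, ∃ L : ℝ,
      (pproc c (t / (ns i + 1 : ℕ)) (zinc b (t / (ns i + 1 : ℕ))) (ns i + 1)).2 =
        ENNReal.ofReal (Real.exp L) ∧
      |L - 2 * c * (Real.exp (b t - t / 2) / (1 + c * (pproc c (t / (ns i + 1 : ℕ))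
        (zinc b (t / (ns i + 1 : ℕ))) (ns i + 1)).1.2) - 1)| ≤
        8 * C * ∑ k ∈ Finset.range (ns i + 1), |zinc b (t / (ns i + 1 : ℕ)) k| ^ 3
         + 65 * C ^ 4 * t * (t / (ns i + 1 : ℕ)) ^ 2 := by
    filter_upwards [ev1, ev2, ev3] with i h1 h2 h3
    generalize ns i = n at *
    obtain ⟨δ, hδ⟩ : ∃ δ, δ = t / ((n + 1 : ℕ) : ℝ) := ⟨_, rfl⟩
    rw [← hδ] at h1 h2 h3 ⊢
    have hδ0 : 0 < δ := by rw [hδ]; positivity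
    have hnδ : (n + 1 : ℕ) * δ = t := by rw [hδ]; field_simp
    have hgrid : ∀ k ≤ n + 1, (k : ℝ) * δ ∈ Icc 0 t := by
      intro k hk
      refine ⟨by positivity, ?_⟩
      rw [← hnδ]
      gcongr
    have hmono : Monotone (fun k => (pproc c δ (zinc b δ) k).1.2) := by
      refine monotone_nat_of_le_succ fun k => ?_
      rw [pproc_snd_succ c δ b hb0]
      have := Real.exp_pos (((b (k * δ) - k * δ / 2) +
        (b ((k + 1 : ℕ) * δ) - (k + 1 : ℕ) * δ / 2)) / 2)
      nlinarith
    have hlow : ∀ k ≤ n + 1, l ≤ 1 + c * (pproc c δ (zinc b δ) k).1.2 := by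
      intro k hk
      have m1 : (pproc c δ (zinc b δ) k).1.2 ≤ (pproc c δ (zinc b δ) (n + 1)).1.2 := hmono hk
      have m0 : 0 ≤ (pproc c δ (zinc b δ) k).1.2 := by
        have : (pproc c δ (zinc b δ) 0).1.2 ≤ _ := hmono (Nat.zero_le k)
        simpa [pproc] using this
      have hl1 : l ≤ 1 := by rw [hl]; exact min_le_left _ _
      rcases le_total 0 c with hc | hc
      · nlinarith
      · nlinarith
    have hpos' : ∀ k ≤ n + 1, 0 < 1 + c * (pproc c δ (zinc b δ) k).1.2 :=
      fun k hk => hl0.trans_le (hlow k hk)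
    refine ⟨_, pproc_den c δ _ _ hpos', ?_⟩
    set g : ℕ → ℝ := fun k => Real.exp (pproc c δ (zinc b δ) k).1.1 /
      (1 + c * (pproc c δ (zinc b δ) k).1.2) with hg
    have g0 : g 0 = 1 := by simp [hg, pproc]
    have gn : g (n + 1) = Real.exp (b t - t / 2) /
        (1 + c * (pproc c δ (zinc b δ) (n + 1)).1.2) := by
      simp only [hg]
      rw [pproc_fst c δ b hb0, hnδ]
    rw [← gn, ← g0, ← Finset.sum_range_sub g, Finset.mul_sum, ← Finset.sum_sub_distrib]
    refine (Finset.abs_sum_le_sum_abs _ _).trans ?_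
    have est : ∀ k ∈ Finset.range (n + 1),
        |plog c δ (pproc c δ (zinc b δ) k).1 (pproc c δ (zinc b δ) (k + 1)).1 -
          2 * c * (g (k + 1) - g k)| ≤ 8 * C * |zinc b δ k| ^ 3 + 65 * C ^ 4 * δ ^ 3 := by
      intro k hk
      have hk' : k < n + 1 := Finset.mem_range.1 hk
      have st : (pproc c δ (zinc b δ) (k + 1)).1 =
        pstep δ (pproc c δ (zinc b δ) k).1 (zinc b δ k) := rfl
      simp only [hg]
      have q1 := hpos' (k + 1) (by omega)
      rw [st] at q1 ⊢
      refine plog_estimate c δ C hδ0 (by linarith) h2 _ _ ?_ (hpos' k (by omega)) q1 ?_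
      · have : |zinc b δ k| ^ 3 ≤ 1 :=
          (Finset.single_le_sum (f := fun k => |zinc b δ k| ^ 3) (fun _ _ => by positivity) hk).trans h3
        by_contra hcon
        push Not at hcon
        have := one_lt_pow₀ hcon (n := 3) (by norm_num)
        linarith
      · rw [← st]
        refine (abs_log_div_le hl0 (hlow k (by omega)) (hlow (k + 1) (by omega))).trans ?_
        rw [pproc_snd_succ c δ b hb0]
        have hE : Real.exp (((b (k * δ) - k * δ / 2) +
          (b ((k + 1 : ℕ) * δ) - (k + 1 : ℕ) * δ / 2)) / 2) ≤ K := by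
          have k1 := hK _ (hgrid k (by omega))
          have k2 := hK _ (hgrid (k + 1) (by omega))
          rw [← Real.le_log_iff_exp_le hK0] at k1 k2 ⊢
          linarith
        have hEp := Real.exp_pos (((b (k * δ) - k * δ / 2) +
          (b ((k + 1 : ℕ) * δ) - (k + 1 : ℕ) * δ / 2)) / 2)
        generalize Real.exp (((b (k * δ) - k * δ / 2) +
          (b ((k + 1 : ℕ) * δ) - (k + 1 : ℕ) * δ / 2)) / 2) = E at *
        have : 1 + c * ((pproc c δ (zinc b δ) k).1.2 + δ * E) -
          (1 + c * (pproc c δ (zinc b δ) k).1.2) = c * E * δ := by ring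
        rw [this, abs_mul, abs_mul, abs_of_pos hδ0, abs_of_pos hEp, hC]
        calc |c| * E * δ / l ≤ |c| * K * δ / l := by gcongr
          _ = |c| * K / l * δ := by ring
          _ ≤ _ := by gcongr; linarith
    refine (Finset.sum_le_sum est).trans ?_
    rw [Finset.sum_add_distrib, ← Finset.mul_sum, Finset.sum_const, Finset.card_range, nsmul_eq_mul]
    apply le_of_eq
    congr 1
    calc _ = 65 * C ^ 4 * ((n + 1 : ℕ) * δ) * δ ^ 2 := by ring
      _ = _ := by rw [hnδ]
  obtain ⟨L, hL⟩ : ∃ L : ℕ → ℝ, ∀ᶠ i in atTop, 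
      (pproc c (t / (ns i + 1 : ℕ)) (zinc b (t / (ns i + 1 : ℕ))) (ns i + 1)).2 =
        ENNReal.ofReal (Real.exp (L i)) ∧
      |L i - 2 * c * (Real.exp (b t - t / 2) / (1 + c * (pproc c (t / (ns i + 1 : ℕ))
        (zinc b (t / (ns i + 1 : ℕ))) (ns i + 1)).1.2) - 1)| ≤
        8 * C * ∑ k ∈ Finset.range (ns i + 1), |zinc b (t / (ns i + 1 : ℕ)) k| ^ 3
         + 65 * C ^ 4 * t * (t / (ns i + 1 : ℕ)) ^ 2 := by
    exact main.choice
  have hLt : Tendsto L atTop (𝓝 (2 * c * (Real.exp (b t - t / 2) / (1 + c * a) - 1))) := by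
    have r1 : Tendsto (fun i => 8 * C * ∑ k ∈ Finset.range (ns i + 1),
        |zinc b (t / (ns i + 1 : ℕ)) k| ^ 3
         + 65 * C ^ 4 * t * (t / (ns i + 1 : ℕ)) ^ 2) atTop (𝓝 0) := by
      have := (hz.const_mul (8 * C)).add ((hδt.pow 2).const_mul (65 * C ^ 4 * t))
      simpa using this
    have r2 := squeeze_zero_norm' (hL.mono fun i h => by
      rw [Real.norm_eq_abs]; exact h.2) r1
    have r3 : Tendsto (fun i => 2 * c * (Real.exp (b t - t / 2) / (1 + c * (pproc c (t / (ns i + 1 : ℕ))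
        (zinc b (t / (ns i + 1 : ℕ))) (ns i + 1)).1.2) - 1)) atTop
        (𝓝 (2 * c * (Real.exp (b t - t / 2) / (1 + c * a) - 1))) :=
      ((tendsto_const_nhds.div hcA hpos.ne').sub_const 1).const_mul _
    have := r2.add r3
    simpa using this
  refine Tendsto.congr' (hL.mono fun i h => h.1.symm) ?_
  exact (ENNReal.continuous_ofReal.tendsto _).comp ((Real.continuous_exp.tendsto _).comp hLt)


lemma third_moment (δ : ℝ) (hδ : 0 < δ) :
    ∫⁻ x, ‖x‖ₑ ^ 3 ∂(gaussianReal 0 (Real.toNNReal δ)) =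
      ENNReal.ofReal (Real.sqrt δ ^ 3) * ∫⁻ x, ‖x‖ₑ ^ 3 ∂(gaussianReal 0 1) := by
  have h := gaussianReal_map_const_mul (μ := 0) (v := 1) (Real.sqrt δ)
  have e : (NNReal.mk (Real.sqrt δ ^ 2) (sq_nonneg _) * 1 : ℝ≥0) = Real.toNNReal δ := by
    rw [mul_one]
    ext
    rw [Real.coe_toNNReal _ hδ.le]
    exact Real.sq_sqrt hδ.le
  rw [e, mul_zero] at h
  rw [← h, lintegral_map (by fun_prop) (by fun_prop), ← lintegral_const_mul _ (by fun_prop)]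
  congr 1
  ext x
  rw [enorm_mul, mul_pow, Real.enorm_of_nonneg (Real.sqrt_nonneg δ),
    ENNReal.ofReal_pow (Real.sqrt_nonneg δ)]

lemma third_moment_finite : ∫⁻ x, ‖x‖ₑ ^ 3 ∂(gaussianReal 0 1) ≠ ∞ := by
  have := (memLp_id_gaussianReal (μ := 0) (v := 1) 3).eLpNorm_lt_top
  rw [eLpNorm_lt_top_iff_lintegral_rpow_enorm_lt_top (by simp) (by simp)] at this
  have h2 := this.ne
  convert h2 using 3 with x
  rw [← ENNReal.rpow_natCast]
  simp

section BM
variable {Ω' : Type*} [MeasurableSpace Ω'] {P' : Measure Ω'} {W : ℝ → Ω' → ℝ}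

lemma zinc_law (hB : IsBrownianMotion P' W) (δ : ℝ) (hδ : 0 < δ) (k : ℕ) :
    P'.map (fun ω => zinc (fun s => W s ω) δ k) = gaussianReal 0 (Real.toNNReal δ) := by
  have := hB.gaussian_increments (k * δ) ((k + 1 : ℕ) * δ) (by positivity)
    (by gcongr; omega)
  have e : ((k + 1 : ℕ) : ℝ) * δ - k * δ = δ := by push_cast; ring
  rw [e] at this
  exact this

lemma zinc_meas (hB : IsBrownianMotion P' W) (δ : ℝ) (k : ℕ) :
    Measurable (fun ω => zinc (fun s => W s ω) δ k) :=
  (hB.measurable _).sub (hB.measurable _)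

lemma zinc_indep (hB : IsBrownianMotion P' W) (δ : ℝ) (hδ : 0 < δ) :
    iIndepFun (fun k ω => zinc (fun s => W s ω) δ k) P' := by
  exact hB.indep_increments (fun k => k * δ) (fun i j hij => by
    simp only; gcongr) (by simp)

lemma exists_subseq (hB : IsBrownianMotion P' W) (t : ℝ) (ht : 0 < t) :
    ∃ ns : ℕ → ℕ, StrictMono ns ∧ ∀ᵐ ω ∂P', Tendsto (fun i => ∑ k ∈ Finset.range (ns i + 1),
      |zinc (fun s => W s ω) (t / (ns i + 1 : ℕ)) k| ^ 3) atTop (𝓝 0) := by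
  set S : ℕ → Ω' → ℝ := fun n ω => ∑ k ∈ Finset.range (n + 1),
      |zinc (fun s => W s ω) (t / (n + 1 : ℕ)) k| ^ 3 with hS
  have hSm : ∀ n, Measurable (S n) := fun n => 
    Finset.measurable_fun_sum _ fun k _ => (zinc_meas hB _ k).abs.pow_const 3
  set K := ∫⁻ x, ‖x‖ₑ ^ 3 ∂(gaussianReal 0 1) with hK
  have hS1 : ∀ n : ℕ, eLpNorm (S n - 0) 1 P' =
      ENNReal.ofReal (t * Real.sqrt (t / (n + 1 : ℕ))) * K := by
    intro n
    have hδ : 0 < t / (n + 1 : ℕ) := by positivity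
    rw [sub_zero, eLpNorm_one_eq_lintegral_enorm]
    have e1 : ∀ ω, ‖S n ω‖ₑ = ∑ k ∈ Finset.range (n + 1),
        ‖zinc (fun s => W s ω) (t / (n + 1 : ℕ)) k‖ₑ ^ 3 := by
      intro ω
      rw [Real.enorm_of_nonneg (Finset.sum_nonneg fun _ _ => by positivity),
        ENNReal.ofReal_sum_of_nonneg (fun _ _ => by positivity)]
      refine Finset.sum_congr rfl fun k _ => ?_
      rw [ENNReal.ofReal_pow (abs_nonneg _), Real.enorm_eq_ofReal_abs]
    simp_rw [e1]
    rw [lintegral_finsetSum _ (fun k _ => (zinc_meas hB _ k).enorm.pow_const 3)]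
    have e2 : ∀ k ∈ Finset.range (n + 1), ∫⁻ ω, ‖zinc (fun s => W s ω) (t / (n + 1 : ℕ)) k‖ₑ ^ 3 ∂P'
        = ENNReal.ofReal (Real.sqrt (t / (n + 1 : ℕ)) ^ 3) * K := by
      intro k _
      rw [← third_moment _ hδ, ← zinc_law hB _ hδ k, lintegral_map (by fun_prop) (zinc_meas hB _ k)]
    rw [Finset.sum_congr rfl e2, Finset.sum_const, Finset.card_range, nsmul_eq_mul, ← mul_assoc]
    congr 1
    rw [← ENNReal.ofReal_natCast, ← ENNReal.ofReal_mul (by positivity)]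
    congr 1
    have e3 := Real.sq_sqrt hδ.le
    calc _ = ((n + 1 : ℕ) : ℝ) * (Real.sqrt (t / (n + 1 : ℕ)) ^ 2) * Real.sqrt (t / (n + 1 : ℕ)) := by ring
      _ = _ := by
        rw [e3]
        congr 1
        field_simp
  have hlim : Tendsto (fun n => eLpNorm (S n - 0) 1 P') atTop (𝓝 0) := by
    simp_rw [hS1]
    have l1 : Tendsto (fun n : ℕ => t * Real.sqrt (t / (n + 1 : ℕ))) atTop (𝓝 0) := by
      have h1 : Tendsto (fun n : ℕ => ((n + 1 : ℕ) : ℝ)) atTop atTop :=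
        tendsto_natCast_atTop_atTop.comp (tendsto_add_atTop_nat 1)
      have h2 := ((Real.continuous_sqrt.tendsto 0).comp (h1.const_div_atTop t)).const_mul t
      simpa using h2
    have l2 := ENNReal.Tendsto.mul_const (ENNReal.tendsto_ofReal l1)
      (Or.inr third_moment_finite : (ENNReal.ofReal 0 ≠ 0 ∨ K ≠ ∞))
    simpa using l2
  have hm := tendstoInMeasure_of_tendsto_eLpNorm one_ne_zero
    (fun n => (hSm n).aestronglyMeasurable) (g := (0 : Ω' → ℝ))
    (aestronglyMeasurable_zero) hlim
  obtain ⟨ns, h1, h2⟩ := hm.exists_seq_tendsto_ae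
  exact ⟨ns, h1, h2⟩

/-- limiting density in `(log M, A)` coordinates -/
def wden (c : ℝ) (p : ℝ × ℝ) : ℝ≥0∞ :=
  {p : ℝ × ℝ | 0 < 1 + c * p.2}.indicator
    (fun p => ENNReal.ofReal (Real.exp (2 * c * (Real.exp p.1 / (1 + c * p.2) - 1)))) p

lemma measurable_wden (c : ℝ) : Measurable (wden c) := by
  have : Measurable ({p : ℝ × ℝ | 0 < 1 + c * p.2}.indicator
    (fun p => ENNReal.ofReal (Real.exp (2 * c * (Real.exp p.1 / (1 + c * p.2) - 1))))) := by
    apply Measurable.indicator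
    · fun_prop
    · exact measurableSet_lt (f := fun _ => (0 : ℝ))
        (g := fun r : ℝ × ℝ => 1 + c * r.2) measurable_const (by fun_prop)
  exact this

lemma pproc_meas (hB : IsBrownianMotion P' W) (c δ : ℝ) (n : ℕ) :
    Measurable (fun ω => pproc c δ (zinc (fun s => W s ω) δ) n) :=
  meas_pproc (fun _ => inferInstance) monotone_const c δ (fun k ω => zinc (fun s => W s ω) δ k)
    (fun k => zinc_meas hB δ k) n

lemma state_tendsto (hB : IsBrownianMotion P' W) (c t : ℝ) (ht : 0 < t) (ω : Ω') :
    Tendsto (fun n : ℕ => (pproc c (t / (n + 1 : ℕ)) (zinc (fun s => W s ω) (t / (n + 1 : ℕ)))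
      (n + 1)).1) atTop (𝓝 (W t ω - t / 2, A W t ω)) := by
  have h2 := riemann c t ht (fun s => W s ω) (hB.continuous_paths ω) (hB.start ω)
  refine Tendsto.prodMk_nhds ?_ h2
  refine tendsto_const_nhds.congr fun n => ?_
  have this : ((n + 1 : ℕ) : ℝ) * (t / (n + 1 : ℕ)) = t := by field_simp
  have h := pproc_fst c (t / (n + 1 : ℕ)) (fun s => W s ω) (hB.start ω) (n + 1)
  rw [this] at h
  exact h.symm

lemma state_meas (hB : IsBrownianMotion P' W) (t : ℝ) (ht : 0 < t) :
    Measurable (fun ω => (W t ω - t / 2, A W t ω)) := by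
  refine measurable_of_tendsto_metrizable (f := fun (n : ℕ) ω => (pproc 1 (t / (n + 1 : ℕ))
    (zinc (fun s => W s ω) (t / (n + 1 : ℕ))) (n + 1)).1) (fun n => (pproc_meas hB _ _ _).fst) ?_
  rw [tendsto_pi_nhds]
  exact fun ω => state_tendsto hB 1 t ht ω

lemma fatou_ineq (hB : IsBrownianMotion P' W) (c t : ℝ) (ht : 0 < t)
    (G : BoundedContinuousFunction (ℝ × ℝ) ℝ≥0) :
    ∫⁻ ω, wden c (W t ω - t / 2, A W t ω) * G (ptrans c (W t ω - t / 2, A W t ω)) ∂P' ≤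
      ∫⁻ ω, G (W t ω - t / 2, A W t ω) ∂P' := by
  haveI := hB.isProbabilityMeasure
  obtain ⟨ns, hns, hae⟩ := exists_subseq hB t ht
  have hnt := hns.tendsto_atTop
  have mG : Measurable (fun p => (G p : ℝ≥0∞)) := G.continuous.measurable.coe_nnreal_ennreal
  have hδ : ∀ n : ℕ, 0 < t / (n + 1 : ℕ) := fun n => by positivity
  set R : ℕ → Ω' → (ℝ × ℝ) × ℝ≥0∞ := fun i ω => 
    pproc c (t / (ns i + 1 : ℕ)) (zinc (fun s => W s ω) (t / (ns i + 1 : ℕ))) (ns i + 1) with hR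
  have mR : ∀ i, Measurable (R i) := fun i => pproc_meas hB _ _ _
  have step : ∀ i, ∫⁻ ω, (R i ω).2 * G (ptrans c (R i ω).1) ∂P' ≤ ∫⁻ ω, G (R i ω).1 ∂P' := by
    intro i
    exact multistep P' c _ (hδ (ns i)) (fun k ω => zinc (fun s => W s ω) (t / (ns i + 1 : ℕ)) k)
      (fun k => zinc_meas hB _ k) (zinc_indep hB _ (hδ _)) (fun k => zinc_law hB _ (hδ _) k)
      (ns i + 1) (fun p => (G p : ℝ≥0∞)) mG
  have hst : ∀ ω, Tendsto (fun i => (R i ω).1) atTop (𝓝 (W t ω - t / 2, A W t ω)) := fun ω =>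
    (state_tendsto hB c t ht ω).comp hnt
  have rhs : Tendsto (fun i => ∫⁻ ω, G (R i ω).1 ∂P') atTop
      (𝓝 (∫⁻ ω, G (W t ω - t / 2, A W t ω) ∂P')) := by
    refine tendsto_lintegral_of_dominated_convergence (fun _ => ((nndist G 0 : ℝ≥0) : ℝ≥0∞))
      (fun i => mG.comp (mR i).fst) (fun i => ?_) (by simp) ?_
    · refine Eventually.of_forall fun ω => ?_
      simp only
      exact_mod_cast BoundedContinuousFunction.NNReal.upper_bound G _
    · refine Eventually.of_forall fun ω => ?_
      exact ((ENNReal.continuous_coe.comp G.continuous).tendsto _).comp (hst ω)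
  have lhs : ∫⁻ ω, wden c (W t ω - t / 2, A W t ω) * G (ptrans c (W t ω - t / 2, A W t ω)) ∂P' ≤
      ∫⁻ ω, liminf (fun i => (R i ω).2 * G (ptrans c (R i ω).1)) atTop ∂P' := by
    refine lintegral_mono_ae ?_
    filter_upwards [hae] with ω hω
    by_cases h : 0 < 1 + c * A W t ω
    · have hw : wden c (W t ω - t / 2, A W t ω) = ENNReal.ofReal
        (Real.exp (2 * c * (Real.exp (W t ω - t / 2) / (1 + c * A W t ω) - 1))) := by
        unfold wden
        rw [indicator_of_mem]
        exact h
      have d1 := density_tendsto c t ht (fun s => W s ω) (hB.continuous_paths ω) (hB.start ω)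
        ns hnt hω (A W t ω) rfl h
      rw [← hw] at d1
      have d2 : Tendsto (fun i => ptrans c (R i ω).1) atTop
          (𝓝 (ptrans c (W t ω - t / 2, A W t ω))) := by
        have x1 := (continuous_fst.tendsto _).comp (hst ω)
        have x2 := (continuous_snd.tendsto _).comp (hst ω)
        have x3 := (x2.const_mul c).const_add 1
        exact (x1.sub ((x3.log h.ne').const_mul 2)).prodMk_nhds (x2.div x3 h.ne')
      have d3 : Tendsto (fun i => ((G (ptrans c (R i ω).1) : ℝ≥0) : ℝ≥0∞)) atTop
          (𝓝 (G (ptrans c (W t ω - t / 2, A W t ω)) : ℝ≥0∞)) :=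
        ((ENNReal.continuous_coe.comp G.continuous).tendsto _).comp d2
      have d4 := ENNReal.Tendsto.mul d1 (Or.inr (by simp)) d3 (Or.inr (by rw [hw]; simp))
      exact d4.liminf_eq.ge
    · have hw : wden c (W t ω - t / 2, A W t ω) = 0 := by
        unfold wden
        rw [indicator_of_notMem]
        exact h
      simp [hw]
  refine lhs.trans ((lintegral_liminf_le fun i => ?_).trans ?_)
  · exact (mR i).snd.mul (mG.comp ((measurable_ptrans c).comp (mR i).fst))
  · refine (liminf_le_liminf (Eventually.of_forall step)).trans ?_
    exact rhs.liminf_eq.le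

lemma measure_le_of_bcf {E : Type*} [PseudoEMetricSpace E] [MeasurableSpace E] [BorelSpace E]
    (ν μ : Measure E) [IsFiniteMeasure ν] [IsFiniteMeasure μ]
    (h : ∀ G : BoundedContinuousFunction E ℝ≥0, ∫⁻ x, G x ∂ν ≤ ∫⁻ x, G x ∂μ) : ν ≤ μ := by
  have hcl : ∀ F, IsClosed F → ν F ≤ μ F := by
    intro F hF
    have p : ∀ n : ℕ, 0 < 1 / ((n : ℝ) + 1) := fun n => Nat.one_div_pos_of_nat
    have t1 := tendsto_lintegral_thickenedIndicator_of_isClosed ν hF p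
      tendsto_one_div_add_atTop_nhds_zero_nat
    have t2 := tendsto_lintegral_thickenedIndicator_of_isClosed μ hF p
      tendsto_one_div_add_atTop_nhds_zero_nat
    exact le_of_tendsto_of_tendsto' t1 t2 fun n => h _
  refine Measure.le_iff.2 fun s hs => ?_
  rw [hs.measure_eq_iSup_isClosed_of_ne_top (measure_ne_top ν s)]
  exact iSup₂_le fun F hF => iSup_le fun hF' => (hcl F hF').trans (measure_mono hF)

lemma main_ineq (hB : IsBrownianMotion P' W) (c t : ℝ) (ht : 0 < t)
    (F : ℝ × ℝ → ℝ≥0∞) (hF : Measurable F) :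
    ∫⁻ ω, wden c (W t ω - t / 2, A W t ω) * F (ptrans c (W t ω - t / 2, A W t ω)) ∂P' ≤
      ∫⁻ ω, F (W t ω - t / 2, A W t ω) ∂P' := by
  haveI := hB.isProbabilityMeasure
  have mS := state_meas hB t ht
  set μ := P'.map (fun ω => (W t ω - t / 2, A W t ω)) with hμ
  haveI : IsProbabilityMeasure μ := Measure.isProbabilityMeasure_map mS.aemeasurable
  set ν := (μ.withDensity (wden c)).map (ptrans c) with hν
  have hν' : ∀ F : ℝ × ℝ → ℝ≥0∞, Measurable F → ∫⁻ x, F x ∂ν =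
      ∫⁻ ω, wden c (W t ω - t / 2, A W t ω) * F (ptrans c (W t ω - t / 2, A W t ω)) ∂P' := by
    intro F hF
    have m2 : Measurable (fun p => F (ptrans c p)) := hF.comp (measurable_ptrans c)
    rw [hν, lintegral_map hF (measurable_ptrans c),
      lintegral_withDensity_eq_lintegral_mul _ (measurable_wden c) m2, hμ,
      lintegral_map ((measurable_wden c).mul m2) mS]
    rfl
  have hle : ∀ G : BoundedContinuousFunction (ℝ × ℝ) ℝ≥0, ∫⁻ x, G x ∂ν ≤ ∫⁻ x, G x ∂μ := by
    intro G
    have mG : Measurable (fun p => (G p : ℝ≥0∞)) := G.continuous.measurable.coe_nnreal_ennreal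
    rw [hν' _ mG, hμ, lintegral_map mG mS]
    exact fatou_ineq hB c t ht G
  haveI : IsFiniteMeasure ν := by
    constructor
    have := hle 1
    simp at this
    exact lt_of_le_of_lt this ENNReal.one_lt_top
  rw [← hν' F hF, ← lintegral_map hF mS]
  exact lintegral_mono' (measure_le_of_bcf ν μ hle) le_rfl

lemma A_nonneg (t : ℝ) (ht : 0 < t) (ω : Ω') : 0 ≤ A W t ω :=
  intervalIntegral.integral_nonneg ht.le fun _ _ => (Real.exp_pos _).le

lemma enn_identity (hB : IsBrownianMotion P' W) (c t : ℝ) (ht : 0 < t) (hc : 0 < c)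
    (f : ℝ × ℝ → ℝ≥0∞) (hf : Measurable f) :
    ∫⁻ ω, {ω | A W t ω < 1 / c}.indicator (fun ω => f (M W t ω, A W t ω)) ω ∂P' =
      ∫⁻ ω, ENNReal.ofReal (Real.exp (2 * c * (M W t ω / (1 + c * A W t ω) - 1))) *
        f (M W t ω / (1 + c * A W t ω) ^ 2, A W t ω / (1 + c * A W t ω)) ∂P' := by
  have mph : Measurable (fun p : ℝ × ℝ => f (Real.exp p.1, p.2)) := hf.comp (by fun_prop)
  have hexp : ∀ x b : ℝ, 0 < b → Real.exp (x - 2 * Real.log b) = Real.exp x / b ^ 2 := by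
    intro x b hb
    rw [Real.exp_sub, two_mul, Real.exp_add, Real.exp_log hb, sq]
  apply le_antisymm
  · set F : ℝ × ℝ → ℝ≥0∞ := fun p => 
      ENNReal.ofReal (Real.exp (2 * c * (Real.exp p.1 / (1 + c * p.2) - 1))) *
        f (Real.exp p.1 / (1 + c * p.2) ^ 2, p.2 / (1 + c * p.2)) with hF
    have mF : Measurable F := by
      apply Measurable.mul
      · fun_prop
      · exact hf.comp (by fun_prop)
    refine le_trans (le_of_eq ?_) (main_ineq hB (-c) t ht F mF)
    refine lintegral_congr fun ω => ?_
    have hA := A_nonneg (W := W) t ht ω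
    by_cases h : A W t ω < 1 / c
    · rw [indicator_of_mem (by exact h)]
      have h1 : 0 < 1 + -c * A W t ω := by
        rw [lt_div_iff₀ hc] at h
        linarith
      have hw : wden (-c) (W t ω - t / 2, A W t ω) = ENNReal.ofReal
        (Real.exp (2 * (-c) * (Real.exp (W t ω - t / 2) / (1 + -c * A W t ω) - 1))) := by
        unfold wden
        rw [indicator_of_mem]
        exact h1
      rw [hw]
      simp only [hF, ptrans]
      rw [hexp _ _ h1, ← mul_assoc, ← ENNReal.ofReal_mul (Real.exp_pos _).le, ← Real.exp_add]
      have e0 : 1 + c * (A W t ω / (1 + -c * A W t ω)) = 1 / (1 + -c * A W t ω) := by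
        rw [eq_div_iff h1.ne', add_mul, mul_assoc, div_mul_cancel₀ _ h1.ne']; ring
      rw [e0]
      have e1 : 2 * (-c) * (Real.exp (W t ω - t / 2) / (1 + -c * A W t ω) - 1) +
        2 * c * (Real.exp (W t ω - t / 2) / (1 + -c * A W t ω) ^ 2 / (1 / (1 + -c * A W t ω)) - 1)
          = 0 := by
        generalize 1 + -c * A W t ω = b at h1 ⊢
        field_simp
        ring
      rw [e1]
      simp only [Real.exp_zero, ENNReal.ofReal_one, one_mul]
      unfold M
      generalize 1 + -c * A W t ω = b at h1 ⊢
      congr 2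
      · field_simp
      · field_simp
    · rw [indicator_of_notMem (by exact h)]
      have hw : wden (-c) (W t ω - t / 2, A W t ω) = 0 := by
        unfold wden
        rw [indicator_of_notMem]
        intro h1
        apply h
        rw [lt_div_iff₀ hc]
        have h1 : 0 < 1 + -c * A W t ω := h1
        linarith
      simp [hw]
  · set F : ℝ × ℝ → ℝ≥0∞ := {p : ℝ × ℝ | p.2 < 1 / c}.indicator
      (fun p => f (Real.exp p.1, p.2)) with hF
    have mF : Measurable F := mph.indicator (measurableSet_lt measurable_snd measurable_const)
    refine le_trans (le_of_eq ?_) ((main_ineq hB c t ht F mF).trans (le_of_eq ?_))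
    · refine lintegral_congr fun ω => ?_
      have hA := A_nonneg (W := W) t ht ω
      have h1 : 0 < 1 + c * A W t ω := by positivity
      have hw : wden c (W t ω - t / 2, A W t ω) = ENNReal.ofReal
        (Real.exp (2 * c * (Real.exp (W t ω - t / 2) / (1 + c * A W t ω) - 1))) := by
        unfold wden
        rw [indicator_of_mem]
        exact h1
      have h2 : ptrans c (W t ω - t / 2, A W t ω) ∈ {p : ℝ × ℝ | p.2 < 1 / c} := by
        show A W t ω / (1 + c * A W t ω) < 1 / c
        rw [div_lt_div_iff₀ h1 hc]
        linarith
      rw [hw, hF, indicator_of_mem h2]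
      simp only [ptrans]
      rw [hexp _ _ h1]
      rfl
    · refine lintegral_congr fun ω => ?_
      rfl

end BM


variable {Ω : Type*} [MeasurableSpace Ω] (P : MeasureTheory.Measure Ω) (B : ℝ → Ω → ℝ)

theorem asian_key_identity (hB : IsBrownianMotion P B)
    (t y : ℝ) (ht : 0 < t) (hy : 0 < y)
    (f : ℝ × ℝ → ℝ) (hf : Measurable f) (hf0 : ∀ p, 0 ≤ f p) :
    (∫ ω, ({ω | A B t ω < 2 / y}.indicator (fun ω => f (M B t ω, A B t ω)) ω) ∂P)
      = Real.exp (-y) *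
        ∫ ω, f (M B t ω / (1 + y / 2 * A B t ω) ^ 2,
                A B t ω / (1 + y / 2 * A B t ω)) *
              Real.exp (M B t ω / (y⁻¹ + A B t ω / 2)) ∂P := by
  have mS := state_meas hB t ht
  have mA : Measurable (fun ω => A B t ω) := mS.snd
  have mM : Measurable (fun ω => M B t ω) := Real.measurable_exp.comp mS.fst
  have key := enn_identity hB (y / 2) t ht (by positivity) (fun p => ENNReal.ofReal (f p))
    hf.ennreal_ofReal
  have m1 : Measurable (fun ω => {ω | A B t ω < 2 / y}.indicator
      (fun ω => f (M B t ω, A B t ω)) ω) :=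
    (hf.comp (mM.prodMk mA)).indicator (measurableSet_lt mA measurable_const)
  have m2 : Measurable (fun ω => f (M B t ω / (1 + y / 2 * A B t ω) ^ 2,
                A B t ω / (1 + y / 2 * A B t ω)) *
              Real.exp (M B t ω / (y⁻¹ + A B t ω / 2))) :=
    (hf.comp (by fun_prop)).mul (by fun_prop)
  rw [← integral_const_mul]
  rw [integral_eq_lintegral_of_nonneg_ae
      (Eventually.of_forall fun ω => indicator_nonneg (fun ω _ => hf0 _) ω) 
      m1.aestronglyMeasurable,
    integral_eq_lintegral_of_nonneg_ae
      (Eventually.of_forall fun ω => mul_nonneg (Real.exp_pos _).le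
        (mul_nonneg (hf0 _) (Real.exp_pos _).le)) (m2.const_mul _).aestronglyMeasurable]
  congr 1
  rw [one_div_div] at key
  refine Eq.trans ?_ (key.trans ?_)
  · refine lintegral_congr fun ω => ?_
    by_cases h : ω ∈ {ω | A B t ω < 2 / y}
    · rw [indicator_of_mem h, indicator_of_mem h]
    · rw [indicator_of_notMem h, indicator_of_notMem h, ENNReal.ofReal_zero]
  · refine lintegral_congr fun ω => ?_
    have hA := A_nonneg (W := B) t ht ω
    rw [← ENNReal.ofReal_mul (Real.exp_pos _).le]
    congr 1
    rw [mul_left_comm, ← Real.exp_add, mul_comm]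
    congr 2
    have h1 : 0 < 1 + y / 2 * A B t ω := by positivity
    have e : y⁻¹ + A B t ω / 2 = (1 + y / 2 * A B t ω) / y := by field_simp
    rw [e]
    field_simp
    ring
end
end

section
/- For every t > 0 and every a > 0, P[ A_t < a ] = e^{-2/a} · E[ exp( 2·M_t / (a + A_t) ) ]. -/
open MeasureTheory ProbabilityTheory Real Set

noncomputable section

/-- Standard Gaussian measure. -/
def gam : Measure ℝ := gaussianReal 0 1

instance gam_prob : IsProbabilityMeasure gam := by unfold gam; infer_instance

/-- The one step multiplicative factor. -/
def Xf (σ x : ℝ) : ℝ := Real.exp (-σ * x + σ ^ 2 / 2)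

/-- The one step transition operator, with `s = 1` or `s = -1`. -/
def Kop (s σ : ℝ) (f : ℝ → ℝ) (r : ℝ) : ℝ := ∫ x, f ((r + s * σ ^ 2) * Xf σ x) ∂gam

/-- Multiplication by `exp (-2/z)` on the positive half line. -/
def Vop (f : ℝ → ℝ) (z : ℝ) : ℝ := expNegInvGlue (z / 2) * f z

lemma Xf_pos (σ x : ℝ) : 0 < Xf σ x := Real.exp_pos _

lemma Xf_measurable (σ : ℝ) : Measurable (Xf σ) := by unfold Xf; fun_prop

lemma Xf_pow (σ x : ℝ) (j : ℕ) :
    Xf σ x ^ j = Real.exp (j * σ ^ 2 / 2) * Real.exp ((-(j * σ)) * x) := by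
  unfold Xf
  rw [← Real.exp_nat_mul, ← Real.exp_add]
  congr 1; ring

lemma integrable_exp_gam (b : ℝ) : Integrable (fun x => Real.exp (b * x)) gam := by
  unfold gam; exact integrable_exp_mul_gaussianReal b

lemma integral_exp_gam (b : ℝ) : ∫ x, Real.exp (b * x) ∂gam = Real.exp (b ^ 2 / 2) := by
  have h := congrFun (mgf_fun_id_gaussianReal (μ := 0) (v := 1)) b
  simp only [mgf] at h
  unfold gam
  rw [h]; simp

lemma Xf_pow_integrable (σ : ℝ) (j : ℕ) : Integrable (fun x => Xf σ x ^ j) gam := by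
  simp_rw [Xf_pow]
  exact (integrable_exp_gam _).const_mul _

lemma Xf_pow_integral (σ : ℝ) (j : ℕ) :
    ∫ x, Xf σ x ^ j ∂gam = Real.exp ((j * (j + 1) / 2 : ℝ) * σ ^ 2) := by
  simp_rw [Xf_pow]
  rw [integral_const_mul, integral_exp_gam, ← Real.exp_add]
  congr 1; ring

/-- Dominating function. -/
def Wf (x : ℝ) : ℝ := (|x| + 1) * Real.exp (|x| + 1)

lemma Wf_integrable : Integrable (fun x => Wf x ^ 3) gam := by
  have h1 : Integrable (fun x => Real.exp 3 * (Real.exp (6 * x) + Real.exp ((-6) * x))) gam :=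
    ((integrable_exp_gam 6).add (integrable_exp_gam (-6))).const_mul _
  refine h1.mono' ?_ ?_
  · unfold Wf
    have : Continuous (fun x : ℝ => ((|x| + 1) * Real.exp (|x| + 1)) ^ 3) := by fun_prop
    exact this.aestronglyMeasurable
  · refine Filter.Eventually.of_forall fun x => ?_
    have hx := abs_nonneg x
    have h0 : 0 ≤ Wf x := by unfold Wf; positivity
    rw [Real.norm_of_nonneg (by positivity)]
    have h2 : Wf x ≤ Real.exp (2 * |x| + 1) := by
      unfold Wf
      have : Real.exp (2 * |x| + 1) = Real.exp |x| * Real.exp (|x| + 1) := by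
        rw [← Real.exp_add]; congr 1; ring
      rw [this]
      gcongr
      exact Real.add_one_le_exp _
    calc Wf x ^ 3 ≤ Real.exp (2 * |x| + 1) ^ 3 := by gcongr
      _ = Real.exp 3 * Real.exp (6 * |x|) := by
        rw [← Real.exp_nat_mul, ← Real.exp_add]; congr 1; push_cast; ring
      _ ≤ _ := by
        gcongr
        rcases abs_cases x with ⟨h, _⟩ | ⟨h, _⟩ <;> rw [h]
        · linarith [Real.exp_pos (-6 * x)]
        · have : 6 * -x = -6 * x := by ring
          rw [this]; linarith [Real.exp_pos (6 * x)]

lemma abs_exp_sub_one_le_mul (y : ℝ) : |Real.exp y - 1| ≤ |y| * Real.exp |y| := by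
  have h1 := Real.add_one_le_exp y
  have h2 := Real.add_one_le_exp (-y)
  have h3 : Real.exp y * Real.exp (-y) = 1 := by rw [← Real.exp_add]; simp
  have h4 := Real.exp_pos y
  have h5 : Real.exp y ≤ Real.exp |y| := Real.exp_le_exp.2 (le_abs_self y)
  have h6 : 1 ≤ Real.exp |y| := Real.one_le_exp (abs_nonneg y)
  rw [abs_le]
  constructor
  · nlinarith [neg_abs_le y, abs_nonneg y]
  · nlinarith [le_abs_self y, abs_nonneg y]

lemma Xf_sub_one_le {σ : ℝ} (hσ : 0 < σ) (h1 : σ ≤ 1) (x : ℝ) : |Xf σ x - 1| ≤ σ * Wf x := by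
  have hx := abs_nonneg x
  have hy : |(-σ * x + σ ^ 2 / 2)| ≤ σ * (|x| + 1) := by
    calc |(-σ * x + σ ^ 2 / 2)| ≤ |-σ * x| + |σ ^ 2 / 2| := abs_add_le _ _
      _ = σ * |x| + σ ^ 2 / 2 := by
        rw [abs_mul, abs_neg, abs_of_pos hσ, abs_of_nonneg (by positivity : 0 ≤ σ ^ 2 / 2)]
      _ ≤ _ := by nlinarith
  have hy2 : |(-σ * x + σ ^ 2 / 2)| ≤ |x| + 1 := by nlinarith
  unfold Xf Wf
  refine (abs_exp_sub_one_le_mul _).trans ?_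
  rw [← mul_assoc]
  gcongr

lemma Xf_le {σ : ℝ} (hσ : 0 < σ) (h1 : σ ≤ 1) (x : ℝ) : Xf σ x ≤ Wf x := by
  have hx := abs_nonneg x
  unfold Xf Wf
  have : Real.exp (-σ * x + σ ^ 2 / 2) ≤ Real.exp (|x| + 1) := by
    apply Real.exp_le_exp.2
    nlinarith [neg_abs_le x, le_abs_self x]
  nlinarith [Real.exp_pos (|x| + 1)]

/-- Smoothness class on the positive half line. -/
def Sm (c : ℝ) (f f1 f2 f3 : ℝ → ℝ) : Prop :=
  (Measurable f ∧ Measurable f1 ∧ Measurable f2 ∧ Measurable f3) ∧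
  (∀ r, 0 < r → HasDerivAt f (f1 r) r ∧ HasDerivAt f1 (f2 r) r ∧ HasDerivAt f2 (f3 r) r) ∧
  (∀ r, 0 < r → |f r| ≤ c ∧ |f1 r| ≤ c ∧ |f2 r| ≤ c ∧ |f3 r| ≤ c)

lemma Sm.nonneg {c : ℝ} {f f1 f2 f3 : ℝ → ℝ} (h : Sm c f f1 f2 f3) : 0 ≤ c :=
  (abs_nonneg _).trans (h.2.2 1 one_pos).1

lemma taylor_pos {c : ℝ} {f f1 f2 f3 : ℝ → ℝ} (h : Sm c f f1 f2 f3) {z y : ℝ} (hz : 0 < z)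
    (hy : 0 < y) :
    |f y - f z - f1 z * (y - z) - f2 z / 2 * (y - z) ^ 2| ≤ c * |y - z| ^ 3 := by
  obtain ⟨-, hd, hb⟩ := h
  have hpos : ∀ u ∈ uIcc z y, 0 < u := fun u hu => lt_of_lt_of_le (lt_min hz hy) hu.1
  have hdist : ∀ u ∈ uIcc z y, |u - z| ≤ |y - z| := fun u hu => by
    have := abs_sub_left_of_mem_uIcc hu
    exact this
  have hc : 0 ≤ c := (abs_nonneg _).trans (hb 1 one_pos).1
  have e2 : ∀ u ∈ uIcc z y, |f2 u - f2 z| ≤ c * |y - z| := by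
    intro u hu
    have := Convex.norm_image_sub_le_of_norm_hasDerivWithin_le (s := uIcc z y) (f := f2) (f' := f3)
      (C := c) (x := z) (y := u) (fun x hx => (hd x (hpos x hx)).2.2.hasDerivWithinAt)
      (fun x hx => (hb x (hpos x hx)).2.2.2) (convex_uIcc _ _) left_mem_uIcc hu
    simp only [Real.norm_eq_abs] at this
    exact this.trans (mul_le_mul_of_nonneg_left (hdist u hu) (by positivity))
  have e1 : ∀ u ∈ uIcc z y, |f1 u - f1 z - f2 z * (u - z)| ≤ c * |y - z| * |y - z| := by
    intro u hu
    have := Convex.norm_image_sub_le_of_norm_hasDerivWithin_le (s := uIcc z y)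
      (f := fun u => f1 u - f2 z * (u - z)) (f' := fun u => f2 u - f2 z)
      (C := c * |y - z|) (x := z) (y := u)
      (fun x hx => by
        have h1 := (hd x (hpos x hx)).2.1
        have h2 := ((hasDerivAt_id x).sub_const z).const_mul (f2 z)
        have h3 := h1.sub h2
        simp only [mul_one] at h3
        exact h3.hasDerivWithinAt)
      (fun x hx => e2 x hx) (convex_uIcc _ _) left_mem_uIcc hu
    simp only [Real.norm_eq_abs] at this
    have e : f1 u - f1 z - f2 z * (u - z) = f1 u - f2 z * (u - z) - (f1 z - f2 z * (z - z)) := by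
      ring
    rw [e]
    exact this.trans (mul_le_mul_of_nonneg_left (hdist u hu) (by positivity))
  have := Convex.norm_image_sub_le_of_norm_hasDerivWithin_le (s := uIcc z y)
      (f := fun u => f u - f1 z * (u - z) - f2 z / 2 * (u - z) ^ 2)
      (f' := fun u => f1 u - f1 z - f2 z * (u - z))
      (C := c * |y - z| * |y - z|) (x := z) (y := y)
      (fun x hx => by
        have h1 := (hd x (hpos x hx)).1
        have h2 := ((hasDerivAt_id x).sub_const z).const_mul (f1 z)
        have h4 := (((hasDerivAt_id x).sub_const z).pow 2).const_mul (f2 z / 2)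
        have h3 := (h1.sub h2).sub h4
        refine (h3.congr_deriv ?_).hasDerivWithinAt
        simp; ring)
      (fun x hx => e1 x hx) (convex_uIcc _ _) left_mem_uIcc right_mem_uIcc
  simp only [Real.norm_eq_abs] at this
  have e : f y - f z - f1 z * (y - z) - f2 z / 2 * (y - z) ^ 2
    = f y - f1 z * (y - z) - f2 z / 2 * (y - z) ^ 2
      - (f z - f1 z * (z - z) - f2 z / 2 * (z - z) ^ 2) := by ring
  rw [e]
  refine this.trans (le_of_eq (by ring))

lemma moment_one {d s z : ℝ} (hd : 0 < d) (hd1 : d ≤ 1 / 3) (hs : |s| ≤ 1) (hz : 0 < z) :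
    |(z + s * d) * Real.exp d - z - d * (z + s)| ≤ 3 * d ^ 2 * (1 + z ^ 3) := by
  have hE := Real.abs_exp_sub_one_sub_id_le (x := d) (by rw [abs_of_pos hd]; linarith)
  set E := Real.exp d - 1 - d with hEd
  have he : Real.exp d = 1 + d + E := by rw [hEd]; ring
  have h1 : (z + s * d) * Real.exp d - z - d * (z + s) = z * E + s * (d * (d + E)) := by
    rw [he]; ring
  rw [h1]
  have hz3 : z ≤ 1 + z ^ 3 := by nlinarith [sq_nonneg (z - 1), sq_nonneg z]
  calc |z * E + s * (d * (d + E))| ≤ |z * E| + |s * (d * (d + E))| := abs_add_le _ _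
    _ = z * |E| + |s| * (d * |d + E|) := by
      rw [abs_mul, abs_mul, abs_mul, abs_of_pos hz, abs_of_pos hd]
    _ ≤ z * d ^ 2 + 1 * (d * (d + d ^ 2)) := by
      gcongr
      exact (abs_add_le _ _).trans (by rw [abs_of_pos hd]; linarith)
    _ ≤ _ := by
      have : 0 < z ^ 3 := by positivity
      nlinarith [mul_le_mul_of_nonneg_left hz3 (sq_nonneg d), mul_pos (pow_pos hd 2) this,
        pow_pos hd 2]

lemma moment_two {d s z : ℝ} (hd : 0 < d) (hd1 : d ≤ 1 / 3) (hs : |s| ≤ 1) (hz : 0 < z) :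
    |(z + s * d) ^ 2 * Real.exp (3 * d) - 2 * z * (z + s * d) * Real.exp d + z ^ 2 - d * z ^ 2|
      ≤ 26 * d ^ 2 * (1 + z ^ 3) := by
  have hE := Real.abs_exp_sub_one_sub_id_le (x := d) (by rw [abs_of_pos hd]; linarith)
  have hF := Real.abs_exp_sub_one_sub_id_le (x := 3 * d)
    (by rw [abs_of_pos (by linarith)]; linarith)
  set E := Real.exp d - 1 - d with hEd
  set F := Real.exp (3 * d) - 1 - 3 * d with hFd
  have he : Real.exp d = 1 + d + E := by rw [hEd]; ring
  have hf : Real.exp (3 * d) = 1 + 3 * d + F := by rw [hFd]; ring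
  have h1 : (z + s * d) ^ 2 * Real.exp (3 * d) - 2 * z * (z + s * d) * Real.exp d + z ^ 2
      - d * z ^ 2
      = z ^ 2 * (F - 2 * E) + s * (2 * z * d * (F - E + 2 * d)) + s ^ 2 * (d ^ 2 * (1 + 3 * d + F))
      := by
    rw [he, hf]; ring
  rw [h1]
  have hz1 : z ≤ 1 + z ^ 3 := by nlinarith [sq_nonneg (z - 1), sq_nonneg z]
  have hz2 : z ^ 2 ≤ 1 + z ^ 3 := by nlinarith [sq_nonneg (z - 1), sq_nonneg z]
  have hz3 : 0 < z ^ 3 := by positivity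
  have b1 : |F - 2 * E| ≤ 11 * d ^ 2 := by
    rw [abs_le] at *; constructor <;> nlinarith [hE.1, hE.2, hF.1, hF.2]
  have b2 : |F - E + 2 * d| ≤ 6 * d := by
    rw [abs_le] at *; constructor <;> nlinarith [hE.1, hE.2, hF.1, hF.2]
  have b3 : |1 + 3 * d + F| ≤ 3 := by
    rw [abs_le] at *; constructor <;> nlinarith [hE.1, hE.2, hF.1, hF.2]
  have b4 : |s ^ 2| ≤ 1 := by rw [abs_pow]; exact pow_le_one₀ (abs_nonneg _) hs
  calc _ ≤ |z ^ 2 * (F - 2 * E)| + |s * (2 * z * d * (F - E + 2 * d))|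
        + |s ^ 2 * (d ^ 2 * (1 + 3 * d + F))| := abs_add_three _ _ _
    _ = z ^ 2 * |F - 2 * E| + |s| * (2 * z * d * |F - E + 2 * d|)
        + |s ^ 2| * (d ^ 2 * |1 + 3 * d + F|) := by
      rw [abs_mul, abs_mul s, abs_mul (s ^ 2), abs_mul (2 * z * d), abs_mul (d ^ 2),
        abs_of_pos (by positivity : 0 < z ^ 2), abs_of_pos (by positivity : 0 < 2 * z * d),
        abs_of_pos (by positivity : 0 < d ^ 2)]
    _ ≤ z ^ 2 * (11 * d ^ 2) + 1 * (2 * z * d * (6 * d)) + 1 * (d ^ 2 * 3) := by gcongr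
    _ ≤ _ := by
      nlinarith [mul_le_mul_of_nonneg_left hz1 (sq_nonneg d), mul_pos (pow_pos hd 2) hz3,
        pow_pos hd 2, mul_le_mul_of_nonneg_left hz2 (sq_nonneg d)]

/-- The constant `∫ W³`. -/
def CW : ℝ := ∫ x, Wf x ^ 3 ∂gam

lemma CW_nonneg : 0 ≤ CW := integral_nonneg fun x => by
  have := abs_nonneg x
  show 0 ≤ Wf x ^ 3
  unfold Wf; positivity

lemma step_expand {σ s c z : ℝ} {f f1 f2 f3 : ℝ → ℝ} (hσ : 0 < σ) (hσ1 : σ ^ 2 ≤ 1 / 3)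
    (hs : |s| ≤ 1) (h : Sm c f f1 f2 f3) (hz : 0 < z) (hz' : 0 < z + s * σ ^ 2) :
    |Kop s σ f z - f z - σ ^ 2 * ((z + s) * f1 z + z ^ 2 / 2 * f2 z)|
      ≤ (4 * CW + 16) * c * σ ^ 3 * (1 + z ^ 3) := by
  have hc := h.nonneg
  have hσ2 : σ ≤ 1 := by nlinarith
  set d := σ ^ 2 with hd
  have hdpos : 0 < d := by positivity
  set p := z + s * d with hp
  have hfm : Measurable (fun x => f (p * Xf σ x)) :=
    h.1.1.comp ((Xf_measurable σ).const_mul p)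
  have hypos : ∀ x, 0 < p * Xf σ x := fun x => mul_pos hz' (Xf_pos _ _)
  have hfi : Integrable (fun x => f (p * Xf σ x)) gam :=
    Integrable.of_bound hfm.aestronglyMeasurable c
      (Filter.Eventually.of_forall fun x => (h.2.2 _ (hypos x)).1)
  have hX1 : Integrable (fun x => Xf σ x) gam := by simpa using Xf_pow_integrable σ 1
  have hX2 := Xf_pow_integrable σ 2
  have iX1 : ∫ x, Xf σ x ∂gam = Real.exp d := by
    have := Xf_pow_integral σ 1
    norm_num at this; exact this
  have iX2 : ∫ x, Xf σ x ^ 2 ∂gam = Real.exp (3 * d) := by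
    have := Xf_pow_integral σ 2
    norm_num at this; exact this
  set rho : ℝ → ℝ := fun x => f (p * Xf σ x) - f z - f1 z * (p * Xf σ x - z)
    - f2 z / 2 * (p * Xf σ x - z) ^ 2 with hrho
  have hrho2 : rho = fun x => f (p * Xf σ x) + ((-f z + f1 z * z - f2 z / 2 * z ^ 2)
      + ((-f1 z * p + f2 z * z * p) * Xf σ x + (- f2 z / 2 * p ^ 2) * Xf σ x ^ 2)) := by
    funext x; rw [hrho]; ring
  have irho : ∫ x, rho x ∂gam = Kop s σ f z - f z - f1 z * (p * Real.exp d - z)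
      - f2 z / 2 * (p ^ 2 * Real.exp (3 * d) - 2 * z * p * Real.exp d + z ^ 2) := by
    rw [hrho2]
    rw [integral_add hfi, integral_add (integrable_const _), integral_add (hX1.const_mul _)
      (hX2.const_mul _), integral_const_mul, integral_const_mul, iX1, iX2]
    · simp only [integral_const, probReal_univ, one_smul]
      unfold Kop
      ring
    · exact (hX1.const_mul _).add (hX2.const_mul _)
    · exact (integrable_const _).add ((hX1.const_mul _).add (hX2.const_mul _))
  have brho : |∫ x, rho x ∂gam| ≤ c * ((1 + z) ^ 3 * σ ^ 3) * CW := by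
    unfold CW
    rw [← integral_const_mul]
    rw [← Real.norm_eq_abs]
    refine norm_integral_le_of_norm_le (Wf_integrable.const_mul _) ?_
    refine Filter.Eventually.of_forall fun x => ?_
    refine (taylor_pos h hz (hypos x)).trans ?_
    have hW : 0 ≤ Wf x := by
      have := abs_nonneg x
      unfold Wf; positivity
    have : |p * Xf σ x - z| ≤ (1 + z) * σ * Wf x := by
      have e : p * Xf σ x - z = z * (Xf σ x - 1) + s * (d * Xf σ x) := by rw [hp]; ring
      rw [e]
      calc _ ≤ |z * (Xf σ x - 1)| + |s * (d * Xf σ x)| := abs_add_le _ _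
        _ = z * |Xf σ x - 1| + |s| * (d * Xf σ x) := by
          rw [abs_mul, abs_mul, abs_of_pos hz, abs_of_pos (mul_pos hdpos (Xf_pos _ _))]
        _ ≤ z * (σ * Wf x) + 1 * (σ * Wf x) := by
          gcongr
          · exact Xf_sub_one_le hσ hσ2 x
          · exact (mul_pos hdpos (Xf_pos _ _)).le
          · exact (Xf_pos _ _).le
          · rw [hd]; nlinarith
          · exact Xf_le hσ hσ2 x
        _ = _ := by ring
    calc c * |p * Xf σ x - z| ^ 3 ≤ c * ((1 + z) * σ * Wf x) ^ 3 := by gcongr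
      _ = _ := by ring
  have m1 := moment_one hdpos hσ1 hs hz
  have m2 := moment_two hdpos hσ1 hs hz
  have hf1 := (h.2.2 z hz).2.1
  have hf2 := (h.2.2 z hz).2.2.1
  have e : Kop s σ f z - f z - d * ((z + s) * f1 z + z ^ 2 / 2 * f2 z)
    = ∫ x, rho x ∂gam + f1 z * (p * Real.exp d - z - d * (z + s))
      + f2 z / 2 * (p ^ 2 * Real.exp (3 * d) - 2 * z * p * Real.exp d + z ^ 2 - d * z ^ 2) := by
    rw [irho]; ring
  rw [e]
  have hz3 : (1 + z) ^ 3 ≤ 4 * (1 + z ^ 3) := by nlinarith [sq_nonneg (z - 1), sq_nonneg z]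
  have hds : d ^ 2 ≤ σ ^ 3 := by
    rw [hd, ← pow_mul]; exact pow_le_pow_of_le_one hσ.le hσ2 (by norm_num)
  have := CW_nonneg
  calc _ ≤ |∫ x, rho x ∂gam| + |f1 z * (p * Real.exp d - z - d * (z + s))|
      + |f2 z / 2 * (p ^ 2 * Real.exp (3 * d) - 2 * z * p * Real.exp d + z ^ 2 - d * z ^ 2)| :=
        abs_add_three _ _ _
    _ = |∫ x, rho x ∂gam| + |f1 z| * |p * Real.exp d - z - d * (z + s)|
      + |f2 z| / 2 * |p ^ 2 * Real.exp (3 * d) - 2 * z * p * Real.exp d + z ^ 2 - d * z ^ 2| := by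
        rw [abs_mul, abs_mul, abs_div, abs_two]
    _ ≤ c * ((4 * (1 + z ^ 3)) * σ ^ 3) * CW + c * (3 * σ ^ 3 * (1 + z ^ 3))
      + c / 2 * (26 * σ ^ 3 * (1 + z ^ 3)) := by
        gcongr
        · refine brho.trans ?_
          gcongr
        · refine m1.trans ?_
          gcongr
        · refine m2.trans ?_
          gcongr
    _ = _ := by ring

lemma Kop_measurable (s σ : ℝ) {f : ℝ → ℝ} (hf : Measurable f) : Measurable (Kop s σ f) := by
  have : Measurable (fun q : ℝ × ℝ => f ((q.1 + s * σ ^ 2) * Xf σ q.2)) :=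
    hf.comp ((measurable_fst.add_const _).mul ((Xf_measurable σ).comp measurable_snd))
  exact (this.stronglyMeasurable.integral_prod_right).measurable

lemma KX_measurable (σ : ℝ) (j : ℕ) {f : ℝ → ℝ} (hf : Measurable f) :
    Measurable (fun r => ∫ x, Xf σ x ^ j * f ((r + σ ^ 2) * Xf σ x) ∂gam) := by
  have : Measurable (fun q : ℝ × ℝ => Xf σ q.2 ^ j * f ((q.1 + σ ^ 2) * Xf σ q.2)) :=
    (((Xf_measurable σ).comp measurable_snd).pow_const j).mul
    (hf.comp ((measurable_fst.add_const _).mul ((Xf_measurable σ).comp measurable_snd)))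
  exact (this.stronglyMeasurable.integral_prod_right).measurable

lemma KX_deriv (σ : ℝ) (j : ℕ) {f f' : ℝ → ℝ} (hf : Measurable f) (hf' : Measurable f') {c : ℝ}
    (hd : ∀ r, 0 < r → HasDerivAt f (f' r) r) (hb : ∀ r, 0 < r → |f r| ≤ c)
    (hb' : ∀ r, 0 < r → |f' r| ≤ c) {r : ℝ} (hr : 0 < r) :
    HasDerivAt (fun r => ∫ x, Xf σ x ^ j * f ((r + σ ^ 2) * Xf σ x) ∂gam)
      (∫ x, Xf σ x ^ (j + 1) * f' ((r + σ ^ 2) * Xf σ x) ∂gam) r := by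
  have hpos : ∀ r : ℝ, 0 < r → ∀ x, 0 < (r + σ ^ 2) * Xf σ x := fun r hr x =>
    mul_pos (by positivity) (Xf_pos _ _)
  have hm : ∀ (j : ℕ) (g : ℝ → ℝ), Measurable g → ∀ r : ℝ,
      AEStronglyMeasurable (fun x => Xf σ x ^ j * g ((r + σ ^ 2) * Xf σ x)) gam := fun j g hg r =>
    (((Xf_measurable σ).pow_const j).mul
      (hg.comp ((Xf_measurable σ).const_mul _))).aestronglyMeasurable
  have hbd : ∀ (j : ℕ) (g : ℝ → ℝ), (∀ r, 0 < r → |g r| ≤ c) → ∀ r, 0 < r → ∀ x,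
      ‖Xf σ x ^ j * g ((r + σ ^ 2) * Xf σ x)‖ ≤ Xf σ x ^ j * c := fun j g hg r hr x => by
    have := (Xf_pos σ x).le
    rw [norm_mul, Real.norm_eq_abs, Real.norm_eq_abs, abs_of_nonneg (by positivity)]
    gcongr
    exact hg _ (hpos r hr x)
  refine (hasDerivAt_integral_of_dominated_loc_of_deriv_le (s := Ioi 0)
    (F := fun r x => Xf σ x ^ j * f ((r + σ ^ 2) * Xf σ x))
    (F' := fun r x => Xf σ x ^ (j + 1) * f' ((r + σ ^ 2) * Xf σ x))
    (bound := fun x => Xf σ x ^ (j + 1) * c) (Ioi_mem_nhds hr)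
    (Filter.Eventually.of_forall fun r => hm j f hf r)
    (((Xf_pow_integrable σ j).mul_const c).mono' (hm j f hf r)
      (Filter.Eventually.of_forall fun x => hbd j f hb r hr x))
    (hm (j + 1) f' hf' r) (Filter.Eventually.of_forall fun x r hr => hbd (j + 1) f' hb' r hr x)
    ((Xf_pow_integrable σ (j + 1)).mul_const c) ?_).2
  refine Filter.Eventually.of_forall fun x r hr => ?_
  have h1 := hd _ (hpos r hr x)
  have h2 : HasDerivAt (fun r => (r + σ ^ 2) * Xf σ x) (Xf σ x) r := by
    simpa using ((hasDerivAt_id r).add_const (σ ^ 2)).mul_const (Xf σ x)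
  have h3 := (h1.comp r h2).const_mul (Xf σ x ^ j)
  refine h3.congr_deriv ?_
  ring

lemma KX_bound (σ : ℝ) (j : ℕ) (hj : j ≤ 3) {f : ℝ → ℝ} {c : ℝ}
    (hb : ∀ r, 0 < r → |f r| ≤ c) {r : ℝ} (hr : 0 < r) :
    |∫ x, Xf σ x ^ j * f ((r + σ ^ 2) * Xf σ x) ∂gam| ≤ c * Real.exp (13 * σ ^ 2) := by
  have hc : 0 ≤ c := (abs_nonneg _).trans (hb 1 one_pos)
  have h1 : |∫ x, Xf σ x ^ j * f ((r + σ ^ 2) * Xf σ x) ∂gam| ≤ ∫ x, Xf σ x ^ j * c ∂gam := by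
    rw [← Real.norm_eq_abs]
    refine norm_integral_le_of_norm_le ((Xf_pow_integrable σ j).mul_const c) ?_
    refine Filter.Eventually.of_forall fun x => ?_
    have := (Xf_pos σ x).le
    rw [norm_mul, Real.norm_eq_abs, Real.norm_eq_abs, abs_of_nonneg (by positivity)]
    gcongr
    exact hb _ (mul_pos (by positivity) (Xf_pos _ _))
  refine h1.trans ?_
  rw [integral_mul_const, Xf_pow_integral, mul_comm]
  gcongr
  interval_cases j <;> norm_num

lemma Sm_Kop (σ : ℝ) {c : ℝ} {f f1 f2 f3 : ℝ → ℝ} (h : Sm c f f1 f2 f3) :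
    ∃ g1 g2 g3, Sm (c * Real.exp (13 * σ ^ 2)) (Kop 1 σ f) g1 g2 g3 := by
  have e : Kop 1 σ f = fun r => ∫ x, Xf σ x ^ 0 * f ((r + σ ^ 2) * Xf σ x) ∂gam := by
    funext r; simp [Kop]
  obtain ⟨⟨a0, a1, a2, a3⟩, hd, hb⟩ := h
  refine ⟨fun r => ∫ x, Xf σ x ^ 1 * f1 ((r + σ ^ 2) * Xf σ x) ∂gam,
    fun r => ∫ x, Xf σ x ^ 2 * f2 ((r + σ ^ 2) * Xf σ x) ∂gam,
    fun r => ∫ x, Xf σ x ^ 3 * f3 ((r + σ ^ 2) * Xf σ x) ∂gam, ?_⟩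
  rw [e]
  refine ⟨⟨KX_measurable σ 0 a0, KX_measurable σ 1 a1, KX_measurable σ 2 a2,
    KX_measurable σ 3 a3⟩, fun r hr => ⟨?_, ?_, ?_⟩, fun r hr => ⟨?_, ?_, ?_, ?_⟩⟩
  · exact KX_deriv σ 0 a0 a1 (fun r hr => (hd r hr).1) (fun r hr => (hb r hr).1)
      (fun r hr => (hb r hr).2.1) hr
  · exact KX_deriv σ 1 a1 a2 (fun r hr => (hd r hr).2.1) (fun r hr => (hb r hr).2.1)
      (fun r hr => (hb r hr).2.2.1) hr
  · exact KX_deriv σ 2 a2 a3 (fun r hr => (hd r hr).2.2) (fun r hr => (hb r hr).2.2.1)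
      (fun r hr => (hb r hr).2.2.2) hr
  · exact KX_bound σ 0 (by norm_num) (fun r hr => (hb r hr).1) hr
  · exact KX_bound σ 1 (by norm_num) (fun r hr => (hb r hr).2.1) hr
  · exact KX_bound σ 2 (by norm_num) (fun r hr => (hb r hr).2.2.1) hr
  · exact KX_bound σ 3 (by norm_num) (fun r hr => (hb r hr).2.2.2) hr

/-- The weight `exp (-2/r)`. -/
def phi (r : ℝ) : ℝ := expNegInvGlue (r / 2)

lemma phi_continuous : Continuous phi :=
  (expNegInvGlue.contDiff (n := 0)).continuous.comp (continuous_id.div_const 2)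

lemma phi_nonneg (r : ℝ) : 0 ≤ phi r := expNegInvGlue.nonneg _

lemma phi_nonpos {r : ℝ} (hr : r ≤ 0) : phi r = 0 :=
  expNegInvGlue.zero_of_nonpos (by linarith)

lemma phi_pos_eq {r : ℝ} (hr : 0 < r) : phi r = Real.exp (-2 * r⁻¹) := by
  unfold phi expNegInvGlue
  rw [if_neg (by linarith)]
  congr 1
  field_simp

lemma phi_le_one (r : ℝ) : phi r ≤ 1 := by
  rcases le_or_gt r 0 with h | h
  · rw [phi_nonpos h]; norm_num
  · rw [phi_pos_eq h]
    apply Real.exp_le_one_iff.2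
    have : 0 < r⁻¹ := by positivity
    linarith

lemma phi_pow_le {r : ℝ} (hr : 0 < r) (k : ℕ) : (r⁻¹) ^ k * phi r ≤ (k.factorial : ℝ) := by
  have hu : 0 < r⁻¹ := by positivity
  rw [phi_pos_eq hr]
  have h1 := Real.pow_div_factorial_le_exp (r⁻¹) hu.le k
  have h2 : (r⁻¹) ^ k ≤ Real.exp (r⁻¹) * k.factorial := by
    rwa [div_le_iff₀ (by positivity)] at h1
  calc (r⁻¹) ^ k * Real.exp (-2 * r⁻¹) ≤ (Real.exp (r⁻¹) * k.factorial) * Real.exp (-r⁻¹) := by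
        gcongr; linarith
    _ = k.factorial * (Real.exp (r⁻¹) * Real.exp (-r⁻¹)) := by ring
    _ = _ := by rw [← Real.exp_add]; simp

lemma phi_hasDerivAt {r : ℝ} (hr : 0 < r) : HasDerivAt phi (2 * r⁻¹ ^ 2 * phi r) r := by
  have h1 : HasDerivAt (fun r : ℝ => Real.exp (-2 * r⁻¹)) (2 * r⁻¹ ^ 2 * phi r) r := by
    have := ((hasDerivAt_inv hr.ne').const_mul (-2)).exp
    refine this.congr_deriv ?_
    rw [phi_pos_eq hr]
    field_simp
  refine h1.congr_of_eventuallyEq ?_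
  filter_upwards [Ioi_mem_nhds hr] with x hx
  exact phi_pos_eq hx

lemma invpow_hasDerivAt {r : ℝ} (hr : 0 < r) (k : ℕ) :
    HasDerivAt (fun r : ℝ => r⁻¹ ^ k) (-k * r⁻¹ ^ (k + 1)) r := by
  rcases k with _ | k
  · simpa using hasDerivAt_const r (1 : ℝ)
  · have := (hasDerivAt_inv hr.ne').pow (k + 1)
    refine this.congr_deriv ?_
    rw [Nat.add_sub_cancel, ← inv_pow]
    push_cast
    ring

lemma invpow_phi_hasDerivAt {r : ℝ} (hr : 0 < r) (k : ℕ) :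
    HasDerivAt (fun r : ℝ => r⁻¹ ^ k * phi r)
      (2 * (r⁻¹ ^ (k + 2) * phi r) - k * (r⁻¹ ^ (k + 1) * phi r)) r := by
  refine ((invpow_hasDerivAt hr k).mul (phi_hasDerivAt hr)).congr_deriv ?_
  ring

/-- First derivative of `phi`. -/
def phi1 (r : ℝ) : ℝ := 2 * (r⁻¹ ^ 2 * phi r)
/-- Second derivative of `phi`. -/
def phi2 (r : ℝ) : ℝ := 4 * (r⁻¹ ^ 4 * phi r) - 4 * (r⁻¹ ^ 3 * phi r)
/-- Third derivative of `phi`. -/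
def phi3 (r : ℝ) : ℝ := 8 * (r⁻¹ ^ 6 * phi r) - 24 * (r⁻¹ ^ 5 * phi r) + 12 * (r⁻¹ ^ 4 * phi r)

lemma Sm_Vop {c : ℝ} {f f1 f2 f3 : ℝ → ℝ} (h : Sm c f f1 f2 f3) :
    Sm (10000 * c) (Vop f) (fun r => phi1 r * f r + phi r * f1 r)
      (fun r => phi2 r * f r + 2 * (phi1 r * f1 r) + phi r * f2 r)
      (fun r => phi3 r * f r + 3 * (phi2 r * f1 r) + 3 * (phi1 r * f2 r) + phi r * f3 r) := by
  have hc := h.nonneg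
  obtain ⟨⟨a0, a1, a2, a3⟩, hd, hb⟩ := h
  have m0 : Measurable phi := phi_continuous.measurable
  have m1 : Measurable phi1 := by unfold phi1; fun_prop
  have m2 : Measurable phi2 := by unfold phi2; fun_prop
  have m3 : Measurable phi3 := by unfold phi3; fun_prop
  have hV : Vop f = fun r => phi r * f r := rfl
  rw [hV]
  refine ⟨⟨by fun_prop, by fun_prop, by fun_prop, by fun_prop⟩, fun r hr => ?_, fun r hr => ?_⟩
  · obtain ⟨d0, d1, d2⟩ := hd r hr
    have p0 : HasDerivAt phi (phi1 r) r := (phi_hasDerivAt hr).congr_deriv (by unfold phi1; ring)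
    have p1 : HasDerivAt phi1 (phi2 r) r := by
      refine ((invpow_phi_hasDerivAt hr 2).const_mul 2).congr_deriv ?_
      unfold phi2; push_cast; ring
    have p2 : HasDerivAt phi2 (phi3 r) r := by
      refine (((invpow_phi_hasDerivAt hr 4).const_mul 4).sub
        ((invpow_phi_hasDerivAt hr 3).const_mul 4)).congr_deriv ?_
      unfold phi3; push_cast; ring
    refine ⟨(p0.mul d0).congr_deriv (by ring), ?_, ?_⟩
    · exact ((p1.mul d0).add (p0.mul d1)).congr_deriv (by ring)
    · exact (((p2.mul d0).add ((p1.mul d1).const_mul 2)).add (p0.mul d2)).congr_deriv (by ring)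
  · obtain ⟨b0, b1, b2, b3⟩ := hb r hr
    have hu : 0 ≤ r⁻¹ := by positivity
    have hp := phi_nonneg r
    have q0 : |phi r| ≤ 1 := by rw [abs_of_nonneg hp]; exact phi_le_one r
    have k2 := phi_pow_le hr 2
    have k3 := phi_pow_le hr 3
    have k4 := phi_pow_le hr 4
    have k5 := phi_pow_le hr 5
    have k6 := phi_pow_le hr 6
    have n2 : 0 ≤ r⁻¹ ^ 2 * phi r := by positivity
    have n3 : 0 ≤ r⁻¹ ^ 3 * phi r := by positivity
    have n4 : 0 ≤ r⁻¹ ^ 4 * phi r := by positivity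
    have n5 : 0 ≤ r⁻¹ ^ 5 * phi r := by positivity
    have n6 : 0 ≤ r⁻¹ ^ 6 * phi r := by positivity
    norm_num [Nat.factorial] at k2 k3 k4 k5 k6
    simp only [inv_pow] at n2 n3 n4 n5 n6
    have q1 : |phi1 r| ≤ 4 := by
      unfold phi1; simp only [inv_pow]; rw [abs_le]; constructor <;> linarith
    have q2 : |phi2 r| ≤ 120 := by
      unfold phi2; simp only [inv_pow]; rw [abs_le]; constructor <;> linarith
    have q3 : |phi3 r| ≤ 8928 := by
      unfold phi3; simp only [inv_pow]; rw [abs_le]; constructor <;> linarith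
    have hm : ∀ {p g P : ℝ}, |p| ≤ P → |g| ≤ c → |p * g| ≤ P * c := fun {p g P} h1 h2 => by
      rw [abs_mul]; exact mul_le_mul h1 h2 (abs_nonneg _) ((abs_nonneg _).trans h1)
    refine ⟨?_, ?_, ?_, ?_⟩
    · refine (hm q0 b0).trans ?_; linarith
    · have t1 := abs_le.1 (hm q1 b0)
      have t2 := abs_le.1 (hm q0 b1)
      rw [abs_le]; constructor <;> linarith [t1.1, t1.2, t2.1, t2.2]
    · have t1 := abs_le.1 (hm q2 b0)
      have t2 := abs_le.1 (hm q1 b1)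
      have t3 := abs_le.1 (hm q0 b2)
      rw [abs_le]; constructor <;> linarith [t1.1, t1.2, t2.1, t2.2, t3.1, t3.2]
    · have t1 := abs_le.1 (hm q3 b0)
      have t2 := abs_le.1 (hm q2 b1)
      have t3 := abs_le.1 (hm q1 b2)
      have t4 := abs_le.1 (hm q0 b3)
      rw [abs_le]; constructor <;> linarith [t1.1, t1.2, t2.1, t2.2, t3.1, t3.2, t4.1, t4.2]

lemma Vop_nonpos (f : ℝ → ℝ) {z : ℝ} (hz : z ≤ 0) : Vop f z = 0 := by
  show phi z * f z = 0
  rw [phi_nonpos hz, zero_mul]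

lemma Vop_bound {f : ℝ → ℝ} {c : ℝ} (hb : ∀ r, 0 < r → |f r| ≤ c) (z : ℝ) : |Vop f z| ≤ c := by
  have hc : 0 ≤ c := (abs_nonneg _).trans (hb 1 one_pos)
  rcases le_or_gt z 0 with h | h
  · rw [Vop_nonpos f h]; simpa using hc
  · show |phi z * f z| ≤ c
    rw [abs_mul, abs_of_nonneg (phi_nonneg z)]
    have := hb z h
    nlinarith [phi_nonneg z, phi_le_one z, abs_nonneg (f z)]

lemma Kop_bound (s σ : ℝ) {f : ℝ → ℝ} {c : ℝ} {z : ℝ}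
    (hb : ∀ x, |f ((z + s * σ ^ 2) * Xf σ x)| ≤ c) : |Kop s σ f z| ≤ c := by
  unfold Kop
  have := norm_integral_le_of_norm_le_const (μ := gam) (C := c)
    (f := fun x => f ((z + s * σ ^ 2) * Xf σ x)) (Filter.Eventually.of_forall hb)
  simpa using this

/-- Constant in the one-step estimate. -/
def C1 : ℝ := 10001 * (4 * CW + 16)

lemma C1_ge : 16 ≤ C1 := by
  have := CW_nonneg
  unfold C1; linarith

lemma one_step {σ c : ℝ} {f f1 f2 f3 : ℝ → ℝ} (hσ : 0 < σ) (hσ1 : σ ^ 2 ≤ 1 / 3)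
    (h : Sm c f f1 f2 f3) (z : ℝ) :
    |Kop (-1) σ (Vop f) z - Vop (Kop 1 σ f) z| ≤ C1 * c * σ ^ 3 * (1 + |z| ^ 3) := by
  have hc := h.nonneg
  have hC := C1_ge
  have hσ2 : σ ≤ 1 := by nlinarith
  have hz0 : z ≤ σ ^ 2 → Kop (-1) σ (Vop f) z = 0 := fun hz => by
    unfold Kop
    have : ∀ x, Vop f ((z + -1 * σ ^ 2) * Xf σ x) = 0 := fun x =>
      Vop_nonpos f (mul_nonpos_of_nonpos_of_nonneg (by linarith) (Xf_pos _ _).le)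
    simp only [this, integral_zero]
  rcases le_or_gt z 0 with hz | hz
  · rw [hz0 (hz.trans (by positivity)), Vop_nonpos _ hz]
    have : 0 ≤ C1 * c * σ ^ 3 * (1 + |z| ^ 3) := by positivity
    simpa using this
  have hz3 : 0 < z ^ 3 := by positivity
  rw [abs_of_pos hz]
  rcases le_or_gt z (σ ^ 2) with hzs | hzs
  · rw [hz0 hzs]
    have hK : |Kop 1 σ f z| ≤ c := Kop_bound 1 σ fun x =>
      (h.2.2 _ (mul_pos (by positivity) (Xf_pos _ _))).1
    have hp : phi z ≤ 2 * σ ^ 3 := by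
      have := phi_pow_le hz 2
      norm_num [Nat.factorial] at this
      have h1 : phi z ≤ 2 * z ^ 2 := by
        rwa [inv_mul_le_iff₀ (by positivity), mul_comm] at this
      have h2 : z ^ 2 ≤ (σ ^ 2) ^ 2 := by gcongr
      have h3 : (σ ^ 2) ^ 2 ≤ σ ^ 3 := by
        rw [← pow_mul]; exact pow_le_pow_of_le_one hσ.le hσ2 (by norm_num)
      linarith
    rw [zero_sub, abs_neg]
    show |phi z * Kop 1 σ f z| ≤ _
    rw [abs_mul, abs_of_nonneg (phi_nonneg z)]
    calc phi z * |Kop 1 σ f z| ≤ (2 * σ ^ 3) * c := by gcongr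
      _ = 2 * c * σ ^ 3 * 1 := by ring
      _ ≤ C1 * c * σ ^ 3 * (1 + z ^ 3) := by gcongr <;> linarith
  · have s1 := step_expand hσ hσ1 (s := 1) (by simp) h hz (by positivity)
    have s2 := step_expand hσ hσ1 (s := -1) (by simp) (Sm_Vop h) hz (by linarith)
    have key : σ ^ 2 * ((z + -1) * (phi1 z * f z + phi z * f1 z)
        + z ^ 2 / 2 * (phi2 z * f z + 2 * (phi1 z * f1 z) + phi z * f2 z))
        = phi z * (σ ^ 2 * ((z + 1) * f1 z + z ^ 2 / 2 * f2 z)) := by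
      unfold phi1 phi2
      field_simp
      ring
    have hV : ∀ g : ℝ → ℝ, Vop g z = phi z * g z := fun _ => rfl
    rw [key, hV f] at s2
    rw [hV (Kop 1 σ f)]
    set T := σ ^ 2 * ((z + 1) * f1 z + z ^ 2 / 2 * f2 z) with hT
    have e : Kop (-1) σ (Vop f) z - phi z * Kop 1 σ f z
      = (Kop (-1) σ (Vop f) z - phi z * f z - phi z * T)
        - phi z * (Kop 1 σ f z - f z - T) := by ring
    rw [e]
    have s3 : |phi z * (Kop 1 σ f z - f z - T)| ≤ |Kop 1 σ f z - f z - T| := by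
      rw [abs_mul, abs_of_nonneg (phi_nonneg z)]
      exact mul_le_of_le_one_left (abs_nonneg _) (phi_le_one z)
    refine (abs_sub _ _).trans ?_
    have e2 : C1 * c * σ ^ 3 * (1 + z ^ 3) =
      (4 * CW + 16) * (10000 * c) * σ ^ 3 * (1 + z ^ 3) + (4 * CW + 16) * c * σ ^ 3 * (1 + z ^ 3) := by
      unfold C1; ring
    rw [e2]
    exact add_le_add s2 (s3.trans s1)

lemma growth {σ : ℝ} (hσ1 : σ ^ 2 ≤ 1 / 3) (z : ℝ) :
    Integrable (fun x => 1 + |(z + -1 * σ ^ 2) * Xf σ x| ^ 3) gam ∧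
    ∫ x, (1 + |(z + -1 * σ ^ 2) * Xf σ x| ^ 3) ∂gam ≤ Real.exp (13 * σ ^ 2) * (1 + |z| ^ 3) := by
  have e : (fun x => 1 + |(z + -1 * σ ^ 2) * Xf σ x| ^ 3)
      = fun x => 1 + |z + -1 * σ ^ 2| ^ 3 * Xf σ x ^ 3 := by
    funext x
    rw [abs_mul, mul_pow, abs_of_pos (Xf_pos σ x)]
  rw [e]
  have hi := (Xf_pow_integrable σ 3).const_mul (|z + -1 * σ ^ 2| ^ 3)
  refine ⟨(integrable_const _).add hi, ?_⟩
  rw [integral_add (integrable_const _) hi, integral_const_mul, Xf_pow_integral]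
  norm_num
  set d := σ ^ 2 with hd
  have hd0 : 0 ≤ d := by positivity
  have hw := abs_nonneg z
  have h1 : |z + -d| ≤ |z| + d := (abs_add_le _ _).trans (by rw [abs_neg, abs_of_nonneg hd0])
  set w := |z| with hwd
  have h2 : |z + -d| ^ 3 ≤ (w + d) ^ 3 := by gcongr
  have hw1 : w ≤ 1 + w ^ 3 := by nlinarith [sq_nonneg (w - 1), sq_nonneg w]
  have hw2 : w ^ 2 ≤ 1 + w ^ 3 := by nlinarith [sq_nonneg (w - 1), sq_nonneg w]
  have hw3 : 0 ≤ w ^ 3 := by positivity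
  have h3 : (w + d) ^ 3 ≤ w ^ 3 + 7 * d * (1 + w ^ 3) := by
    have a1 : 3 * w ^ 2 * d ≤ 3 * d * (1 + w ^ 3) := by nlinarith
    have a2 : 3 * w * d ^ 2 ≤ 3 * d * (1 + w ^ 3) := by
      have : d ^ 2 ≤ d := by nlinarith
      nlinarith
    have a3 : d ^ 3 ≤ d * (1 + w ^ 3) := by
      have : d ^ 2 ≤ 1 := by nlinarith
      nlinarith [mul_nonneg hd0 hw3]
    nlinarith
  have h6 : 1 ≤ Real.exp (6 * d) := Real.one_le_exp (by linarith)
  have h7 : 7 * d + 1 ≤ Real.exp (7 * d) := Real.add_one_le_exp _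
  have e13 : Real.exp (13 * d) = Real.exp (6 * d) * Real.exp (7 * d) := by
    rw [← Real.exp_add]; congr 1; ring
  calc 1 + |z + -d| ^ 3 * Real.exp (6 * d)
      ≤ Real.exp (6 * d) + (w ^ 3 + 7 * d * (1 + w ^ 3)) * Real.exp (6 * d) := by
        gcongr; exact h2.trans h3
    _ = Real.exp (6 * d) * ((7 * d + 1) * (1 + w ^ 3)) := by ring
    _ ≤ Real.exp (6 * d) * (Real.exp (7 * d) * (1 + w ^ 3)) := by gcongr
    _ = _ := by rw [e13]; ring

lemma Sm_iter (σ : ℝ) {c : ℝ} {f f1 f2 f3 : ℝ → ℝ} (h : Sm c f f1 f2 f3) (n : ℕ) :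
    ∃ g1 g2 g3, Sm (c * Real.exp (13 * σ ^ 2 * n)) ((Kop 1 σ)^[n] f) g1 g2 g3 := by
  induction n with
  | zero => exact ⟨f1, f2, f3, by simpa using h⟩
  | succ n ih =>
    obtain ⟨g1, g2, g3, hg⟩ := ih
    obtain ⟨k1, k2, k3, hk⟩ := Sm_Kop σ hg
    refine ⟨k1, k2, k3, ?_⟩
    rw [Function.iterate_succ_apply']
    have : c * Real.exp (13 * σ ^ 2 * ((n + 1 : ℕ) : ℝ))
        = c * Real.exp (13 * σ ^ 2 * n) * Real.exp (13 * σ ^ 2) := by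
      rw [mul_assoc c, ← Real.exp_add]; congr 2; push_cast; ring
    rw [this]; exact hk

lemma iter_meas (s σ : ℝ) {f : ℝ → ℝ} (hf : Measurable f) (n : ℕ) :
    Measurable ((Kop s σ)^[n] f) := by
  induction n with
  | zero => simpa using hf
  | succ n ih => rw [Function.iterate_succ_apply']; exact Kop_measurable s σ ih

lemma iter_bound (s σ : ℝ) {f : ℝ → ℝ} {c : ℝ} (hf : ∀ z, |f z| ≤ c) (n : ℕ) (z : ℝ) :
    |(Kop s σ)^[n] f z| ≤ c := by
  induction n generalizing z with
  | zero => simpa using hf z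
  | succ n ih => rw [Function.iterate_succ_apply']; exact Kop_bound s σ fun x => ih _

lemma telescope {σ c : ℝ} {f f1 f2 f3 : ℝ → ℝ} (hσ : 0 < σ) (hσ1 : σ ^ 2 ≤ 1 / 3)
    (h : Sm c f f1 f2 f3) (n : ℕ) (z : ℝ) :
    |(Kop (-1) σ)^[n] (Vop f) z - Vop ((Kop 1 σ)^[n] f) z|
      ≤ n * (C1 * c * Real.exp (13 * σ ^ 2 * n) * σ ^ 3) * (1 + |z| ^ 3) := by
  have hc := h.nonneg
  have hC := C1_ge
  induction n generalizing z with
  | zero => simp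
  | succ n ih =>
    obtain ⟨g1, g2, g3, hg⟩ := Sm_iter σ h n
    have st := one_step hσ hσ1 hg z
    rw [Function.iterate_succ_apply', Function.iterate_succ_apply']
    set G := (Kop 1 σ)^[n] f with hG
    set H := (Kop (-1) σ)^[n] (Vop f) with hH
    have hHm : Measurable H := iter_meas _ _ (Sm_Vop h).1.1 n
    have hVm : Measurable (Vop G) := (Sm_Vop hg).1.1
    have hHb : ∀ z, |H z| ≤ c := iter_bound _ _ (Vop_bound fun r hr => (h.2.2 r hr).1) n
    have hVb := Vop_bound fun r hr => (hg.2.2 r hr).1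
    have hXm : Measurable fun x => (z + -1 * σ ^ 2) * Xf σ x := (Xf_measurable σ).const_mul _
    have i1 : Integrable (fun x => H ((z + -1 * σ ^ 2) * Xf σ x)) gam :=
      Integrable.of_bound (hHm.comp hXm).aestronglyMeasurable c
        (Filter.Eventually.of_forall fun x => hHb _)
    have i2 : Integrable (fun x => Vop G ((z + -1 * σ ^ 2) * Xf σ x)) gam :=
      Integrable.of_bound (hVm.comp hXm).aestronglyMeasurable _
        (Filter.Eventually.of_forall fun x => hVb _)
    obtain ⟨gi, gb⟩ := growth hσ1 z
    set b := (n : ℝ) * (C1 * c * Real.exp (13 * σ ^ 2 * n) * σ ^ 3) with hb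
    have hb0 : 0 ≤ b := by positivity
    have t1 : |Kop (-1) σ H z - Kop (-1) σ (Vop G) z|
        ≤ b * (Real.exp (13 * σ ^ 2) * (1 + |z| ^ 3)) := by
      unfold Kop
      rw [← integral_sub i1 i2, ← Real.norm_eq_abs]
      refine (norm_integral_le_of_norm_le (gi.const_mul b)
        (Filter.Eventually.of_forall fun x => ih _)).trans ?_
      rw [integral_const_mul]
      gcongr
    have e13 : Real.exp (13 * σ ^ 2 * ((n + 1 : ℕ) : ℝ))
        = Real.exp (13 * σ ^ 2 * n) * Real.exp (13 * σ ^ 2) := by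
      rw [← Real.exp_add]; congr 1; push_cast; ring
    have h1 : 1 ≤ Real.exp (13 * σ ^ 2) := Real.one_le_exp (by positivity)
    calc |Kop (-1) σ H z - Vop (Kop 1 σ G) z|
        = |(Kop (-1) σ H z - Kop (-1) σ (Vop G) z)
          + (Kop (-1) σ (Vop G) z - Vop (Kop 1 σ G) z)| := by congr 1; ring
      _ ≤ b * (Real.exp (13 * σ ^ 2) * (1 + |z| ^ 3))
          + C1 * (c * Real.exp (13 * σ ^ 2 * n)) * σ ^ 3 * (1 + |z| ^ 3) * 1 := by
        refine (abs_add_le _ _).trans (add_le_add t1 (by rw [mul_one]; exact st))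
      _ ≤ b * (Real.exp (13 * σ ^ 2) * (1 + |z| ^ 3))
          + C1 * (c * Real.exp (13 * σ ^ 2 * n)) * σ ^ 3 * (1 + |z| ^ 3)
            * Real.exp (13 * σ ^ 2) := by gcongr
      _ = _ := by rw [e13, hb]; push_cast; ring

/-- The regularised function `exp (2 / (r + c))`. -/
def Gf (c r : ℝ) : ℝ := Real.exp (2 * (|r| + c)⁻¹)

lemma Gf_continuous {c : ℝ} (hc : 0 < c) : Continuous (Gf c) := by
  unfold Gf
  refine Real.continuous_exp.comp (continuous_const.mul ((continuous_abs.add continuous_const).inv₀ ?_))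
  intro x
  have : 0 < |x| + c := by have := abs_nonneg x; linarith
  exact this.ne'

lemma Gf_bound {c : ℝ} (hc : 0 < c) (r : ℝ) : |Gf c r| ≤ Real.exp (2 * c⁻¹) := by
  unfold Gf
  rw [abs_of_pos (Real.exp_pos _)]
  apply Real.exp_le_exp.2
  have := abs_nonneg r
  gcongr
  linarith

lemma upow_G_deriv {c r : ℝ} (hc : 0 < c) (hr : 0 < r) (k : ℕ) :
    HasDerivAt (fun r => ((|r| + c)⁻¹) ^ k * Gf c r)
      (-2 * (((|r| + c)⁻¹) ^ (k + 2) * Gf c r) - k * (((|r| + c)⁻¹) ^ (k + 1) * Gf c r)) r := by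
  have hrc : 0 < r + c := by linarith
  have hid : HasDerivAt (fun r : ℝ => r + c) 1 r := (hasDerivAt_id r).add_const c
  have h1 : HasDerivAt (fun r : ℝ => ((r + c)⁻¹) ^ k * Real.exp (2 * (r + c)⁻¹))
      (-2 * (((r + c)⁻¹) ^ (k + 2) * Real.exp (2 * (r + c)⁻¹))
        - k * (((r + c)⁻¹) ^ (k + 1) * Real.exp (2 * (r + c)⁻¹))) r := by
    have ha : HasDerivAt (fun r : ℝ => ((r + c)⁻¹) ^ k) (-k * (r + c)⁻¹ ^ (k + 1)) r := by
      have := (invpow_hasDerivAt hrc k).comp r hid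
      rw [mul_one] at this
      exact this
    have hb := ((hid.inv hrc.ne').const_mul 2).exp
    refine (ha.mul hb).congr_deriv ?_
    have e3 : -1 / (r + c) ^ 2 = -((r + c)⁻¹ ^ 2) := by field_simp
    simp only [Pi.inv_apply]
    rw [e3]
    ring
  have e : |r| = r := abs_of_pos hr
  unfold Gf
  rw [e]
  refine h1.congr_of_eventuallyEq ?_
  filter_upwards [Ioi_mem_nhds hr] with x hx
  rw [abs_of_pos hx]

lemma Sm_Gf {c : ℝ} (hc : 0 < c) : ∃ C f1 f2 f3, Sm C (Gf c) f1 f2 f3 := by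
  have hm : Measurable (Gf c) := (Gf_continuous hc).measurable
  have hm2 : ∀ k : ℕ, Measurable (fun r => ((|r| + c)⁻¹) ^ k * Gf c r) := fun k =>
    (((measurable_id.abs.add_const c).inv).pow_const k).mul hm
  set L := Real.exp (2 * c⁻¹) with hL
  have hbk : ∀ k : ℕ, ∀ r : ℝ, |((|r| + c)⁻¹) ^ k * Gf c r| ≤ (c⁻¹) ^ k * L := fun k r => by
    have h0 := abs_nonneg r
    rw [abs_mul, abs_of_nonneg (by positivity : 0 ≤ ((|r| + c)⁻¹) ^ k)]
    gcongr
    · linarith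
    · exact Gf_bound hc r
  have hL0 : 0 < L := Real.exp_pos _
  have hc0 : 0 < c⁻¹ := by positivity
  refine ⟨8 * (c⁻¹ ^ 6 * L) + 24 * (c⁻¹ ^ 5 * L) + 12 * (c⁻¹ ^ 4 * L) + 4 * (c⁻¹ ^ 4 * L)
      + 4 * (c⁻¹ ^ 3 * L) + 2 * (c⁻¹ ^ 2 * L) + L,
    fun r => -2 * (((|r| + c)⁻¹) ^ 2 * Gf c r),
    fun r => 4 * (((|r| + c)⁻¹) ^ 4 * Gf c r) + 4 * (((|r| + c)⁻¹) ^ 3 * Gf c r),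
    fun r => -8 * (((|r| + c)⁻¹) ^ 6 * Gf c r) - 24 * (((|r| + c)⁻¹) ^ 5 * Gf c r)
      - 12 * (((|r| + c)⁻¹) ^ 4 * Gf c r), ⟨hm, (hm2 2).const_mul _,
      ((hm2 4).const_mul _).add ((hm2 3).const_mul _),
      (((hm2 6).const_mul _).sub ((hm2 5).const_mul _)).sub ((hm2 4).const_mul _)⟩,
      fun r hr => ⟨?_, ?_, ?_⟩, fun r hr => ?_⟩
  · have := upow_G_deriv hc hr 0
    simpa using this
  · refine ((upow_G_deriv hc hr 2).const_mul (-2)).congr_deriv ?_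
    push_cast; ring
  · refine (((upow_G_deriv hc hr 4).const_mul 4).add
      ((upow_G_deriv hc hr 3).const_mul 4)).congr_deriv ?_
    push_cast; ring
  · have b0 := abs_le.1 (Gf_bound hc r)
    have b2 := abs_le.1 (hbk 2 r)
    have b3 := abs_le.1 (hbk 3 r)
    have b4 := abs_le.1 (hbk 4 r)
    have b5 := abs_le.1 (hbk 5 r)
    have b6 := abs_le.1 (hbk 6 r)
    have p2 : 0 < c⁻¹ ^ 2 * L := by positivity
    have p3 : 0 < c⁻¹ ^ 3 * L := by positivity
    have p4 : 0 < c⁻¹ ^ 4 * L := by positivity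
    have p5 : 0 < c⁻¹ ^ 5 * L := by positivity
    have p6 : 0 < c⁻¹ ^ 6 * L := by positivity
    refine ⟨?_, ?_, ?_, ?_⟩ <;> rw [abs_le] <;> constructor <;>
      linarith [b0.1, b0.2, b2.1, b2.2, b3.1, b3.2, b4.1, b4.2, b5.1, b5.2, b6.1, b6.2]

/-- The discrete affine recursion. -/
def Rk {Ω : Type*} (s σ a : ℝ) (ξ : ℕ → Ω → ℝ) : ℕ → Ω → ℝ
  | 0 => fun _ => a
  | k + 1 => fun ω => (Rk s σ a ξ k ω + s * σ ^ 2) * Real.exp (-ξ k ω + σ ^ 2 / 2)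

lemma Rk_congr {Ω Ω' : Type*} (s σ a : ℝ) (ξ : ℕ → Ω → ℝ) (ξ' : ℕ → Ω' → ℝ) (ω : Ω) (ω' : Ω')
    (k : ℕ) (h : ∀ i < k, ξ i ω = ξ' i ω') : Rk s σ a ξ k ω = Rk s σ a ξ' k ω' := by
  induction k with
  | zero => rfl
  | succ k ih =>
    simp only [Rk]
    rw [ih fun i hi => h i (by omega), h k (by omega)]

lemma Rk_measurable {Ω : Type*} [MeasurableSpace Ω] (s σ a : ℝ) (ξ : ℕ → Ω → ℝ) (k : ℕ)
    (h : ∀ i, Measurable (ξ i)) : Measurable (Rk s σ a ξ k) := by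
  induction k with
  | zero => exact measurable_const
  | succ k ih =>
    have := h k
    simp only [Rk]
    fun_prop

lemma Rk_indep {Ω : Type*} [MeasurableSpace Ω] {P : Measure Ω} (s σ a : ℝ)
    {ξ : ℕ → Ω → ℝ} (k : ℕ) (h : ∀ i, Measurable (ξ i)) (hi : iIndepFun ξ P) :
    IndepFun (Rk s σ a ξ k) (ξ k) P := by
  have h1 := hi.indepFun_finset (Finset.range k) {k} (by simp) h
  let η : ℕ → ((Finset.range k) → ℝ) → ℝ := fun i v => if hi : i ∈ Finset.range k then v ⟨i, hi⟩ else 0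
  have hη : ∀ i, Measurable (η i) := fun i => by
    by_cases hik : i ∈ Finset.range k
    · simp only [η, hik, dite_true]; exact measurable_pi_apply _
    · simp only [η, hik, dite_false]; exact measurable_const
  have h2 := h1.comp (Rk_measurable s σ a η k hη)
    (measurable_pi_apply (⟨k, by simp⟩ : ({k} : Finset ℕ)))
  have e : Rk s σ a ξ k = Rk s σ a η k ∘ (fun ω (i : Finset.range k) => ξ i ω) := by
    funext ω
    refine Rk_congr s σ a ξ η ω _ k fun i hik => ?_
    simp [η, hik]
  rw [e]
  exact h2

lemma Rk_expect {Ω : Type*} [MeasurableSpace Ω] {P : Measure Ω} [IsProbabilityMeasure P]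
    {s σ a : ℝ} (hσ : 0 < σ)
    {ξ : ℕ → Ω → ℝ} (h : ∀ i, Measurable (ξ i)) (hi : iIndepFun ξ P)
    (hl : ∀ i, P.map (ξ i) = gaussianReal 0 (Real.toNNReal (σ ^ 2))) (k : ℕ) {f : ℝ → ℝ} {c : ℝ}
    (hf : Measurable f) (hb : ∀ z, |f z| ≤ c) :
    ∫ ω, f (Rk s σ a ξ k ω) ∂P = (Kop s σ)^[k] f a := by
  induction k generalizing f with
  | zero => simp [Rk]
  | succ k ih =>
    rw [Function.iterate_succ_apply]
    rw [← ih (Kop_measurable s σ hf) (fun z => Kop_bound s σ fun x => hb _)]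
    have hR := Rk_measurable s σ a ξ k h
    have hmap : P.map (ξ k) = gam.map (fun x => σ * x) := by
      rw [hl, gam, gaussianReal_map_const_mul]
      congr 1
      · simp
      · rw [mul_one]
        ext
        simp [Real.coe_toNNReal _ (sq_nonneg σ)]
    have hprod := (indepFun_iff_map_prod_eq_prod_map_map hR.aemeasurable (h k).aemeasurable).1
      (Rk_indep s σ a k h hi)
    let F : ℝ × ℝ → ℝ := fun q => f ((q.1 + s * σ ^ 2) * Real.exp (-q.2 + σ ^ 2 / 2))
    have hF : Measurable F := hf.comp (by fun_prop)
    have e1 : ∫ ω, f (Rk s σ a ξ (k + 1) ω) ∂P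
        = ∫ q, F q ∂(P.map (fun ω => (Rk s σ a ξ k ω, ξ k ω))) := by
      rw [integral_map (hR.prodMk (h k)).aemeasurable hF.aestronglyMeasurable]
      rfl
    have := Measure.isProbabilityMeasure_map (μ := P) hR.aemeasurable
    have := Measure.isProbabilityMeasure_map (μ := P) (h k).aemeasurable
    rw [e1, hprod, integral_prod _ (Integrable.of_bound hF.aestronglyMeasurable c
      (Filter.Eventually.of_forall fun q => hb _))]
    rw [integral_map hR.aemeasurable (hF.stronglyMeasurable.integral_prod_right).aestronglyMeasurable]
    congr 1
    funext ω
    have hFm : AEStronglyMeasurable (fun y => F (Rk s σ a ξ k ω, y)) (gam.map (fun x => σ * x)) :=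
      (hF.comp (measurable_const.prodMk measurable_id)).aestronglyMeasurable
    rw [hmap, integral_map (measurable_const_mul σ).aemeasurable hFm]
    unfold Kop
    congr 1
    funext x
    simp only [F, Xf, neg_mul]

lemma riemann_s1 {g : ℝ → ℝ} (hg : Continuous g) {t : ℝ} (ht : 0 < t) :
    Filter.Tendsto (fun n : ℕ => (t / (n + 1)) * ∑ j ∈ Finset.range (n + 1), g (j * (t / (n + 1))))
      Filter.atTop (nhds (∫ s in (0 : ℝ)..t, g s)) := by
  rw [Metric.tendsto_atTop]
  intro ε hε
  have huc := (isCompact_Icc (a := (0 : ℝ)) (b := t)).uniformContinuousOn_of_continuous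
    hg.continuousOn
  rw [Metric.uniformContinuousOn_iff] at huc
  obtain ⟨η, hη, hu⟩ := huc (ε / (2 * t)) (by positivity)
  obtain ⟨N, hN⟩ := exists_nat_gt (t / η)
  refine ⟨N, fun n hn => ?_⟩
  have hn' : (N : ℝ) ≤ n := by exact_mod_cast hn
  set d := t / ((n : ℝ) + 1) with hd
  have hn1 : (0 : ℝ) < (n : ℝ) + 1 := by positivity
  have hdpos : 0 < d := by positivity
  have hdη : d < η := by
    rw [div_lt_iff₀ hη] at hN
    rw [hd, div_lt_iff₀ hn1]
    nlinarith
  have hdt : ((n : ℝ) + 1) * d = t := by rw [hd]; field_simp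
  have hsum := intervalIntegral.sum_integral_adjacent_intervals (μ := volume) (f := g)
    (a := fun k : ℕ => (k : ℝ) * d) (n := n + 1) (fun k _ => hg.intervalIntegrable _ _)
  have e0 : ((0 : ℕ) : ℝ) * d = 0 := by simp
  have e1 : ((n + 1 : ℕ) : ℝ) * d = t := by push_cast; exact hdt
  simp only [e0, e1] at hsum
  rw [dist_eq_norm, ← hsum, Finset.mul_sum, ← Finset.sum_sub_distrib]
  have hb : ∀ j ∈ Finset.range (n + 1),
      ‖d * g (j * d) - ∫ x in ((j : ℝ) * d)..(((j + 1 : ℕ) : ℝ) * d), g x‖ ≤ ε / (2 * t) * d := by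
    intro j hj
    have hj' : (j : ℝ) + 1 ≤ n + 1 := by
      have := Finset.mem_range.1 hj
      exact_mod_cast this
    have hle : (j : ℝ) * d ≤ ((j + 1 : ℕ) : ℝ) * d := by push_cast; nlinarith
    have hlen : ((j + 1 : ℕ) : ℝ) * d - j * d = d := by push_cast; ring
    have hc : d * g (j * d) = ∫ x in ((j : ℝ) * d)..(((j + 1 : ℕ) : ℝ) * d), g (j * d) := by
      rw [intervalIntegral.integral_const, hlen, smul_eq_mul]
    rw [hc, ← intervalIntegral.integral_sub (by simp) (hg.intervalIntegrable _ _)]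
    have := intervalIntegral.norm_integral_le_of_norm_le_const (C := ε / (2 * t))
      (f := fun x => g (j * d) - g x) (a := (j : ℝ) * d) (b := ((j + 1 : ℕ) : ℝ) * d) ?_
    · rw [hlen, abs_of_pos hdpos] at this
      exact this
    · intro x hx
      rw [uIoc_of_le hle] at hx
      have hj0 : 0 ≤ (j : ℝ) * d := by positivity
      have hx1 := hx.1
      have hx2 := hx.2
      have htop : ((j + 1 : ℕ) : ℝ) * d ≤ t := by
        rw [← hdt]; push_cast; gcongr
      have := hu (j * d) ⟨hj0, by linarith⟩ x ⟨by linarith, by linarith⟩ (by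
        rw [dist_eq_norm, Real.norm_eq_abs, abs_lt]; constructor <;> linarith)
      rw [dist_eq_norm] at this
      exact this.le
  calc _ ≤ ∑ j ∈ Finset.range (n + 1), ε / (2 * t) * d := norm_sum_le_of_le _ hb
    _ = ε / 2 := by
      rw [Finset.sum_const, Finset.card_range, nsmul_eq_mul]
      push_cast
      have : ((n : ℝ) + 1) * (ε / (2 * t) * d) = ε / (2 * t) * t := by rw [← hdt]; ring
      rw [this]; field_simp
    _ < ε := by linarith

lemma Rk_closed {Ω : Type*} (B : ℝ → Ω → ℝ) (h0 : ∀ ω, B 0 ω = 0) (s σ a : ℝ) (k : ℕ) (ω : Ω) :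
    Rk s σ a (fun (i : ℕ) ω => B (((i + 1 : ℕ) : ℝ) * σ ^ 2) ω - B ((i : ℝ) * σ ^ 2) ω) k ω
      = (a + s * (σ ^ 2 * ∑ j ∈ Finset.range k, M B (j * σ ^ 2) ω)) / M B (k * σ ^ 2) ω := by
  induction k with
  | zero => simp [Rk, M, h0]
  | succ k ih =>
    simp only [Rk]
    rw [ih, Finset.sum_range_succ]
    have hM : M B (((k + 1 : ℕ) : ℝ) * σ ^ 2) ω = M B (k * σ ^ 2) ω *
        (Real.exp (-(B (((k + 1 : ℕ) : ℝ) * σ ^ 2) ω - B ((k : ℝ) * σ ^ 2) ω) + σ ^ 2 / 2))⁻¹ := by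
      unfold M
      rw [← Real.exp_neg, ← Real.exp_add]
      congr 1
      push_cast
      ring
    have hMp : 0 < M B (k * σ ^ 2) ω := Real.exp_pos _
    rw [hM]
    have := Real.exp_pos (-(B (((k + 1 : ℕ) : ℝ) * σ ^ 2) ω - B ((k : ℝ) * σ ^ 2) ω) + σ ^ 2 / 2)
    generalize Real.exp (-(B (((k + 1 : ℕ) : ℝ) * σ ^ 2) ω - B ((k : ℝ) * σ ^ 2) ω) + σ ^ 2 / 2)
      = e at *
    generalize M B (k * σ ^ 2) ω = m at *
    generalize ∑ j ∈ Finset.range k, M B (j * σ ^ 2) ω = S at *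
    clear hM ih
    field_simp
    ring

lemma A_tendsto {Ω : Type*} (B : ℝ → Ω → ℝ) (hc : ∀ ω, Continuous fun t => B t ω) {t : ℝ}
    (ht : 0 < t) (ω : Ω) :
    Filter.Tendsto (fun n : ℕ => (t / (n + 1)) *
      ∑ j ∈ Finset.range (n + 1), M B (j * (t / (n + 1))) ω) Filter.atTop (nhds (A B t ω)) := by
  have hg : Continuous fun s => M B s ω := by
    unfold M
    have := hc ω
    fun_prop
  exact riemann_s1 hg ht

lemma A_measurable {Ω : Type*} [MeasurableSpace Ω] (B : ℝ → Ω → ℝ)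
    (hm : ∀ t, Measurable (B t))
    (hc : ∀ ω, Continuous fun t => B t ω) {t : ℝ} (ht : 0 < t) : Measurable (A B t) := by
  have hM : ∀ s, Measurable (M B s) := fun s => by
    unfold M
    exact ((hm s).sub_const _).exp
  refine measurable_of_tendsto_metrizable (f := fun (n : ℕ) ω => (t / (n + 1)) *
      ∑ j ∈ Finset.range (n + 1), M B (j * (t / (n + 1))) ω) (fun n => ?_) ?_
  · exact (Finset.measurable_fun_sum _ fun j _ => hM _).const_mul _
  · exact tendsto_pi_nhds.2 fun ω => A_tendsto B hc ht ω

lemma regularised {Ω : Type*} [MeasurableSpace Ω] {P : Measure Ω} {B : ℝ → Ω → ℝ}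
    (hB : IsBrownianMotion P B) {t a c : ℝ} (ht : 0 < t) (ha : 0 < a) (hc : 0 < c) :
    ∫ ω, Vop (Gf c) ((a - A B t ω) / M B t ω) ∂P
      = phi a * ∫ ω, Gf c ((a + A B t ω) / M B t ω) ∂P := by
  have := hB.isProbabilityMeasure
  obtain ⟨C, f1, f2, f3, hS⟩ := Sm_Gf hc
  have hC := hS.nonneg
  have hC1 := C1_ge
  let σ : ℕ → ℝ := fun n => √(t / (n + 1))
  have hσ2 : ∀ n, σ n ^ 2 = t / (n + 1) := fun n => Real.sq_sqrt (by positivity)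
  have hσ : ∀ n, 0 < σ n := fun n => Real.sqrt_pos.2 (by positivity)
  have hNσ : ∀ n : ℕ, ((n + 1 : ℕ) : ℝ) * σ n ^ 2 = t := fun n => by
    rw [hσ2]; push_cast; field_simp
  have hlim0 : Filter.Tendsto (fun n : ℕ => t / ((n : ℝ) + 1)) Filter.atTop (nhds 0) :=
    tendsto_const_div_atTop_nhds_zero_nat t |>.comp (Filter.tendsto_add_atTop_nat 1) |>.congr
      (fun n => by simp)
  have hσlim : Filter.Tendsto σ Filter.atTop (nhds 0) := by
    have := (Real.continuous_sqrt.tendsto 0).comp hlim0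
    rw [Real.sqrt_zero] at this
    exact this
  let ξ : ℕ → ℕ → Ω → ℝ := fun n i ω =>
    B (((i + 1 : ℕ) : ℝ) * σ n ^ 2) ω - B ((i : ℝ) * σ n ^ 2) ω
  have hξm : ∀ n i, Measurable (ξ n i) := fun n i => (hB.measurable _).sub (hB.measurable _)
  have hξi : ∀ n, iIndepFun (ξ n) P := fun n =>
    hB.indep_increments (fun i => (i : ℝ) * σ n ^ 2)
      (fun i j hij => by
        have : (i : ℝ) ≤ j := by exact_mod_cast hij
        show (i : ℝ) * σ n ^ 2 ≤ j * σ n ^ 2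
        gcongr) (by simp)
  have hξl : ∀ n i, P.map (ξ n i) = gaussianReal 0 (Real.toNNReal (σ n ^ 2)) := fun n i => by
    have h := hB.gaussian_increments ((i : ℝ) * σ n ^ 2) (((i + 1 : ℕ) : ℝ) * σ n ^ 2)
      (by positivity) (by gcongr; simp)
    have e : ((i + 1 : ℕ) : ℝ) * σ n ^ 2 - (i : ℝ) * σ n ^ 2 = σ n ^ 2 := by push_cast; ring
    rw [e] at h
    exact h
  let R : ℝ → ℕ → Ω → ℝ := fun s n => Rk s (σ n) a (ξ n) (n + 1)
  have hRlim : ∀ s ω, Filter.Tendsto (fun n => R s n ω) Filter.atTop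
      (nhds ((a + s * A B t ω) / M B t ω)) := fun s ω => by
    have h1 := (((A_tendsto B hB.continuous_paths ht ω).const_mul s).const_add a).div_const
      (M B t ω)
    refine h1.congr fun n => ?_
    show _ = Rk s (σ n) a (ξ n) (n + 1) ω
    rw [Rk_closed B hB.start, hNσ, hσ2]
  have hRm : ∀ s n, Measurable (R s n) := fun s n => Rk_measurable _ _ _ _ _ (hξm n)
  have hlimit : ∀ (s : ℝ) (f : ℝ → ℝ) (b : ℝ), Continuous f → (∀ z, |f z| ≤ b) →
      Filter.Tendsto (fun n => (Kop s (σ n))^[n + 1] f a) Filter.atTop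
        (nhds (∫ ω, f ((a + s * A B t ω) / M B t ω) ∂P)) := fun s f b hf hb => by
    have h1 : Filter.Tendsto (fun n => ∫ ω, f (R s n ω) ∂P) Filter.atTop
        (nhds (∫ ω, f ((a + s * A B t ω) / M B t ω) ∂P)) := by
      refine tendsto_integral_of_dominated_convergence (fun _ => b)
        (fun n => (hf.measurable.comp (hRm s n)).aestronglyMeasurable) (integrable_const _)
        (fun n => Filter.Eventually.of_forall fun ω => hb _)
        (Filter.Eventually.of_forall fun ω => (hf.tendsto _).comp (hRlim s ω))
    refine h1.congr fun n => ?_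
    exact Rk_expect (hσ n) (hξm n) (hξi n) (hξl n) (n + 1) hf.measurable hb
  have hVc : Continuous (Vop (Gf c)) := phi_continuous.mul (Gf_continuous hc)
  have L1 := hlimit (-1) (Vop (Gf c)) _ hVc (Vop_bound fun r _ => Gf_bound hc r)
  have L2 := (hlimit 1 (Gf c) _ (Gf_continuous hc) (Gf_bound hc)).const_mul (phi a)
  have L3 : Filter.Tendsto (fun n => (Kop (-1) (σ n))^[n + 1] (Vop (Gf c)) a
      - phi a * (Kop 1 (σ n))^[n + 1] (Gf c) a) Filter.atTop (nhds 0) := by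
    have hb : Filter.Tendsto (fun n => σ n * (t * (C1 * C * Real.exp (13 * t)) * (1 + |a| ^ 3)))
        Filter.atTop (nhds 0) := by
      simpa using hσlim.mul_const (t * (C1 * C * Real.exp (13 * t)) * (1 + |a| ^ 3))
    refine squeeze_zero_norm' ?_ hb
    have hev : ∀ᶠ n : ℕ in Filter.atTop, t / ((n : ℝ) + 1) < 1 / 3 :=
      hlim0.eventually (gt_mem_nhds (by norm_num))
    filter_upwards [hev] with n hn
    have h1 : σ n ^ 2 ≤ 1 / 3 := by rw [hσ2]; exact hn.le
    have h2 := telescope (hσ n) h1 hS (n + 1) a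
    have e : 13 * σ n ^ 2 * ((n + 1 : ℕ) : ℝ) = 13 * t := by
      rw [mul_assoc, mul_comm (σ n ^ 2), hNσ]
    rw [e] at h2
    refine h2.trans (le_of_eq ?_)
    calc _ = (((n + 1 : ℕ) : ℝ) * σ n ^ 2) * (σ n * ((C1 * C * Real.exp (13 * t)) * (1 + |a| ^ 3)))
          := by ring
      _ = _ := by rw [hNσ]; ring
  have h := tendsto_nhds_unique (L1.sub L2) L3
  have h' := sub_eq_zero.1 h
  simp only [one_mul, neg_one_mul, ← sub_eq_add_neg] at h'
  exact h'

variable {Ω : Type*} [MeasurableSpace Ω] (P : MeasureTheory.Measure Ω) (B : ℝ → Ω → ℝ)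

theorem cdf_A_eq (hB : IsBrownianMotion P B) (t a : ℝ) (ht : 0 < t) (ha : 0 < a) :
    (P {ω | A B t ω < a}).toReal
      = Real.exp (-2 / a) * ∫ ω, Real.exp (2 * M B t ω / (a + A B t ω)) ∂P := by
  have := hB.isProbabilityMeasure
  have hAm := A_measurable B hB.measurable hB.continuous_paths ht
  have hMm : Measurable (M B t) := by
    unfold M
    exact ((hB.measurable t).sub_const _).exp
  have hMp : ∀ ω, 0 < M B t ω := fun ω => Real.exp_pos _
  have hA0 : ∀ ω, 0 ≤ A B t ω := fun ω =>
    intervalIntegral.integral_nonneg ht.le fun s _ => (Real.exp_pos _).le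
  let Z : Ω → ℝ := fun ω => (a - A B t ω) / M B t ω
  let R : Ω → ℝ := fun ω => (a + A B t ω) / M B t ω
  have hZm : Measurable Z := (hAm.const_sub a).div hMm
  have hRm : Measurable R := (hAm.const_add a).div hMm
  have hRp : ∀ ω, 0 < R ω := fun ω => div_pos (by linarith [hA0 ω]) (hMp ω)
  let c : ℕ → ℝ := fun n => 1 / ((n : ℝ) + 1)
  have hc : ∀ n, 0 < c n := fun n => by positivity
  have hclim : Filter.Tendsto c Filter.atTop (nhds 0) := tendsto_one_div_add_atTop_nhds_zero_nat
  have hG : ∀ r, 0 < r → Filter.Tendsto (fun n => Gf (c n) r) Filter.atTop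
      (nhds (Real.exp (2 * r⁻¹))) := fun r hr => by
    unfold Gf
    rw [abs_of_pos hr]
    have h1 : Filter.Tendsto (fun n => r + c n) Filter.atTop (nhds r) := by
      simpa using hclim.const_add r
    exact (Real.continuous_exp.tendsto _).comp ((h1.inv₀ hr.ne').const_mul 2)
  have hGle : ∀ n r, 0 < r → Gf (c n) r ≤ Real.exp (2 * r⁻¹) := fun n r hr => by
    unfold Gf
    rw [abs_of_pos hr]
    apply Real.exp_le_exp.2
    have := hc n
    gcongr
    linarith
  have hG0 : ∀ n r, 0 ≤ Gf (c n) r := fun n r => (Real.exp_pos _).le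
  have hreg : ∀ n, ∫ ω, Vop (Gf (c n)) (Z ω) ∂P = phi a * ∫ ω, Gf (c n) (R ω) ∂P :=
    fun n => regularised hB ht ha (hc n)
  have hphi : ∀ z, 0 < z → phi z * Real.exp (2 * z⁻¹) = 1 := fun z hz => by
    rw [phi_pos_eq hz, ← Real.exp_add]; simp
  have hVle : ∀ n z, |Vop (Gf (c n)) z| ≤ 1 := fun n z => by
    rcases le_or_gt z 0 with h | h
    · rw [Vop_nonpos _ h]; simp
    · show |phi z * Gf (c n) z| ≤ 1
      rw [abs_of_nonneg (mul_nonneg (phi_nonneg z) (hG0 n z)), ← hphi z h]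
      exact mul_le_mul_of_nonneg_left (hGle n z h) (phi_nonneg z)
  have hset : MeasurableSet {ω | A B t ω < a} := measurableSet_lt hAm measurable_const
  have L1 : Filter.Tendsto (fun n => ∫ ω, Vop (Gf (c n)) (Z ω) ∂P) Filter.atTop
      (nhds (∫ ω, ({ω | A B t ω < a}.indicator (fun _ => (1 : ℝ))) ω ∂P)) := by
    refine tendsto_integral_of_dominated_convergence (fun _ => 1) (fun n => ?_)
      (integrable_const _) (fun n => Filter.Eventually.of_forall fun ω => hVle n _)
      (Filter.Eventually.of_forall fun ω => ?_)
    · have : Continuous (Vop (Gf (c n))) := phi_continuous.mul (Gf_continuous (hc n))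
      exact (this.measurable.comp hZm).aestronglyMeasurable
    · by_cases h : A B t ω < a
      · rw [indicator_of_mem (show ω ∈ {ω | A B t ω < a} from h)]
        have hz : 0 < Z ω := div_pos (by linarith) (hMp ω)
        rw [← hphi _ hz]
        exact (hG _ hz).const_mul _
      · rw [indicator_of_notMem (show ω ∉ {ω | A B t ω < a} from h)]
        have hz : Z ω ≤ 0 := div_nonpos_of_nonpos_of_nonneg (by linarith) (hMp ω).le
        simp only [Vop_nonpos _ hz]
        exact tendsto_const_nhds
  have e1 : ∫ ω, ({ω | A B t ω < a}.indicator (fun _ => (1 : ℝ))) ω ∂P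
      = (P {ω | A B t ω < a}).toReal := by
    rw [integral_indicator hset]; simp [Measure.real]
  rw [e1] at L1
  have hphia : 0 < phi a := by rw [phi_pos_eq ha]; exact Real.exp_pos _
  have hGm : ∀ n, Measurable fun ω => Gf (c n) (R ω) := fun n =>
    (Gf_continuous (hc n)).measurable.comp hRm
  have hGi : ∀ n, Integrable (fun ω => Gf (c n) (R ω)) P := fun n =>
    Integrable.of_bound (hGm n).aestronglyMeasurable _
      (Filter.Eventually.of_forall fun ω => Gf_bound (hc n) _)
  have hb : ∀ n, ∫ ω, Gf (c n) (R ω) ∂P ≤ (phi a)⁻¹ := fun n => by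
    have h1 : phi a * ∫ ω, Gf (c n) (R ω) ∂P ≤ 1 := by
      rw [← hreg n]
      have := norm_integral_le_of_norm_le_const (μ := P) (C := 1)
        (f := fun ω => Vop (Gf (c n)) (Z ω)) (Filter.Eventually.of_forall fun ω => hVle n _)
      simp only [probReal_univ, mul_one] at this
      exact (le_abs_self _).trans this
    rw [← one_div, le_div_iff₀ hphia, mul_comm]
    exact h1
  have hHm : Measurable fun ω => Real.exp (2 * (R ω)⁻¹) := (hRm.inv.const_mul 2).exp
  have hHi : Integrable (fun ω => Real.exp (2 * (R ω)⁻¹)) P := by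
    refine ⟨hHm.aestronglyMeasurable, ?_⟩
    rw [hasFiniteIntegral_iff_ofReal (Filter.Eventually.of_forall fun ω => (Real.exp_pos _).le)]
    have h1 : ∫⁻ ω, ENNReal.ofReal (Real.exp (2 * (R ω)⁻¹)) ∂P
        ≤ Filter.liminf (fun n => ∫⁻ ω, ENNReal.ofReal (Gf (c n) (R ω)) ∂P) Filter.atTop := by
      have h2 := lintegral_liminf_le (u := Filter.atTop) (μ := P) (f := fun n ω => ENNReal.ofReal (Gf (c n) (R ω)))
        (fun n => (hGm n).ennreal_ofReal)
      refine le_trans (le_of_eq ?_) h2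
      congr 1
      funext ω
      have h3 : Filter.Tendsto (fun n => ENNReal.ofReal (Gf (c n) (R ω))) Filter.atTop
          (nhds (ENNReal.ofReal (Real.exp (2 * (R ω)⁻¹)))) :=
        (ENNReal.continuous_ofReal.tendsto _).comp (hG _ (hRp ω))
      exact h3.liminf_eq.symm
    refine lt_of_le_of_lt (h1.trans ?_) (ENNReal.ofReal_lt_top (r := (phi a)⁻¹))
    refine Filter.liminf_le_of_le (by isBoundedDefault) fun b hb' => ?_
    obtain ⟨n, hn⟩ := hb'.exists
    refine hn.trans ?_
    rw [← ofReal_integral_eq_lintegral_ofReal (hGi n)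
      (Filter.Eventually.of_forall fun ω => hG0 n _)]
    exact ENNReal.ofReal_le_ofReal (hb n)
  have L2 : Filter.Tendsto (fun n => ∫ ω, Gf (c n) (R ω) ∂P) Filter.atTop
      (nhds (∫ ω, Real.exp (2 * (R ω)⁻¹) ∂P)) := by
    have hbd : ∀ n, ∀ᵐ ω ∂P, ‖Gf (c n) (R ω)‖ ≤ Real.exp (2 * (R ω)⁻¹) := fun n =>
      Filter.Eventually.of_forall fun ω => by
        rw [Real.norm_of_nonneg (hG0 n _)]
        exact hGle n _ (hRp ω)
    have hlm : ∀ᵐ ω ∂P, Filter.Tendsto (fun n => Gf (c n) (R ω)) Filter.atTop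
        (nhds (Real.exp (2 * (R ω)⁻¹))) := Filter.Eventually.of_forall fun ω => hG _ (hRp ω)
    exact tendsto_integral_of_dominated_convergence
      (fun ω => Real.exp (2 * (R ω)⁻¹)) (fun n => (hGm n).aestronglyMeasurable) hHi hbd hlm
  have L3 := L2.const_mul (phi a)
  simp only [hreg] at L1
  rw [tendsto_nhds_unique L1 L3, phi_pos_eq ha]
  congr 2
  funext ω
  congr 1
  show 2 * ((a + A B t ω) / M B t ω)⁻¹ = _
  rw [inv_div]; ring
end
end
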